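/- arXiv:2004.06770 — 8 statements merged into one kernel-verified Lean document; each statement's English description precedes it below -/
import Mathlib

section
/- Let q be a prime power, let n be a positive integer with n | (q-1), and let α ∈ F_q be a primitive n-th root of unity. Suppose n = νm for positive integers ν, m, and let u ∈ {0,…,m-1}. Let g ∈ F_q[x] be a monic divisor of x^n - 1 and set h = (x^n - 1)/g. Define b(x) = Σ_{i=0}^{m-1} α^{(m-1-i)νu} x^{iν}. Then h divides b in F_q[x] if and only if g(α^{u+im}) = 0 for every i = 0,1,…,ν-1. (Equivalently: the reversed dual code ⟨h⟩ of the cyclic code ⟨g⟩ contains the word b if and only if the set {u+im : i=0,…,ν-1} is contained in the set of zeros of ⟨g⟩.) -/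
/-!
Put `P = X ^ ν - α ^ (ν u)`. The geometric sum formula gives `b * P = X ^ n - 1 = g * h`, and since
`α ^ m` is a primitive `ν`-th root of unity, `P = ∏_{i < ν} (X - α ^ (u + i m))` with distinct
roots. Cancelling `P` and `h`, `h ∣ b ↔ h * P ∣ g * h ↔ P ∣ g`, and `P ∣ g` says exactly that every
root of `P` is a root of `g`.
-/

open Polynomial

/-- Lemma on zeros of cyclic codes.
Let `F = F_q`, `n ∣ q - 1`, `α` a primitive `n`-th root of unity, `n = ν * m`,
`u ∈ {0,…,m-1}`, `g` a monic divisor of `X^n - 1`, `h = (X^n - 1)/g`, and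
`b = ∑_{i<m} α^{(m-1-i)νu} X^{iν}`.  Then `h ∣ b` iff `g(α^{u+im}) = 0` for all `i < ν`. -/
theorem statement0 (q : ℕ) (F : Type) [Field F] [Fintype F]
    (hq : ∃ p s : ℕ, p.Prime ∧ 0 < s ∧ q = p ^ s)
    (hcard : Fintype.card F = q)
    (n ν m : ℕ) (hn : 0 < n) (hν : 0 < ν) (hm : 0 < m) (hnm : n = ν * m)
    (hnq : n ∣ q - 1)
    (α : F) (hα : IsPrimitiveRoot α n)
    (u : ℕ) (hu : u < m)
    (g h b : Polynomial F) (hmonic : g.Monic) (hgdvd : g ∣ Polynomial.X ^ n - 1)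
    (hh : g * h = Polynomial.X ^ n - 1)
    (hb : b = ∑ i ∈ Finset.range m,
      Polynomial.C (α ^ ((m - 1 - i) * ν * u)) * Polynomial.X ^ (i * ν)) :
    h ∣ b ↔ ∀ i < ν, g.eval (α ^ (u + i * m)) = 0 := by
  have hP : (X ^ ν - C (α ^ (ν * u)) : F[X])
      = ∏ i ∈ Finset.range ν, (X - C (α ^ (u + i * m))) := by
    rw [X_pow_sub_C_eq_prod (hα.pow hn (by rw [hnm, mul_comm])) hν
      (show (α ^ u) ^ ν = α ^ (ν * u) by rw [← pow_mul, mul_comm])]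
    refine Finset.prod_congr rfl fun i _ => ?_
    rw [← pow_mul, ← pow_add, add_comm, mul_comm m i]
  have hbP : b * (X ^ ν - C (α ^ (ν * u))) = g * h := by
    have hone : (α ^ (ν * u)) ^ m = 1 := by
      rw [← pow_mul, show ν * u * m = n * u by rw [hnm]; ring, pow_mul, hα.pow_eq_one, one_pow]
    have hgeom := geom_sum₂_mul (X ^ ν : F[X]) (C (α ^ (ν * u))) m
    rw [← pow_mul, ← hnm, ← C_pow, hone, C_1, ← hh] at hgeom
    rw [← hgeom, hb]
    congr 1
    refine Finset.sum_congr rfl fun i _ => ?_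
    rw [← C_pow, ← pow_mul, ← pow_mul, mul_comm (C _), mul_comm i ν,
      show (m - 1 - i) * ν * u = ν * u * (m - 1 - i) by ring]
  have hP0 : (X ^ ν - C (α ^ (ν * u)) : F[X]) ≠ 0 := X_pow_sub_C_ne_zero hν _
  have hgh0 : g * h ≠ 0 := by
    rw [hh, ← C_1]
    exact X_pow_sub_C_ne_zero hn 1
  have hh0 : h ≠ 0 := right_ne_zero_of_mul hgh0
  rw [← mul_dvd_mul_iff_right (a := h) hP0, hbP, mul_comm g h, mul_dvd_mul_iff_left hh0, hP]
  constructor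
  · intro hd i hi
    have hdvd := Finset.dvd_prod_of_mem (fun i => (X - C (α ^ (u + i * m)) : F[X]))
      (Finset.mem_range.mpr hi)
    exact dvd_iff_isRoot.mp (hdvd.trans hd)
  · intro hroot
    refine Finset.prod_dvd_of_coprime (fun i hi j hj hij => ?_) fun i hi =>
      dvd_iff_isRoot.mpr (hroot i (Finset.mem_range.mp hi))
    refine isCoprime_X_sub_C_of_isUnit_sub (IsUnit.mk0 _ (sub_ne_zero.mpr fun he => hij ?_))
    have lt : ∀ k ∈ Finset.range ν, u + k * m < n := fun k hk => by
      have := Nat.mul_le_mul_right m (Nat.succ_le_of_lt (Finset.mem_range.mp hk))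
      rw [hnm]
      linarith [Nat.succ_mul k m]
    -- the exponents `u + i m` all lie below `n`, where powers of `α` are distinct
    have hexp := hα.pow_inj (lt i hi) (lt j hj) he
    exact Nat.eq_of_mul_eq_mul_right hm (Nat.add_left_cancel hexp)
end

section
/- Let q be a prime power and let n, k, r be positive integers with (r+1) | n, r | k, r ≤ k, k(r+1)/r ≤ n, and n | (q-1). Let α ∈ F_q be a primitive n-th root of unity and let C be the cyclic code of length n over F_q with defining set of zeros Z = L ∪ D, where L = {1 + l(r+1) : l = 0,…,n/(r+1) - 1} and D = {1, 2, …, n - (k/r)(r+1) + 1}. Then dim C = k, C has locality r, and the minimum distance of C equals n - k - k/r + 2, i.e., C attains the Singleton-type bound d ≤ n - k - ⌈k/r⌉ + 2 with equality. -/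
/-! The discrete Fourier transform turns the cyclic code into an evaluation code. Write
`n = (r + 1) * v` and `k = m * r`. A vector `c` is recovered from its transform
`t ↦ ∑ j, c j * α ^ (j * t)` by `c i = n⁻¹ * ∑ s < n, ĉ (n - s) * α ^ (i * s)`, so prescribing zeros
on `Z` means that `c` is the vector of values at the `n`-th roots of unity of a polynomial whose
exponents `s` satisfy `n - s ∉ Z`. These exponents are exactly `s = j * (r + 1) + l` with `j < m`
and `l < r` (`exps`, `zeroCode_eq_range`).

* There are `m * r = k` such exponents, all below `n`, and a polynomial of degree below `n` is
  determined by its values at the `n`-th roots of unity; this gives the dimension.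
* No exponent is `≡ -1` modulo `r + 1`, so `∑ α ^ i * c i = 0` over every residue class of indices
  modulo `v`; such a class has `r + 1` elements, which gives the locality.
* The degree is at most `m * (r + 1) - 2`, so a nonzero codeword has at most that many zeros
  (`le_weight`). Equality is reached by `Q (X ^ (r + 1)) * g`, where `Q` has degree `m - 1` and kills
  `m - 1` cosets of the group of `(r + 1)`-st roots of unity, and `g` has degree `r - 1` and kills
  `r - 1` elements of one further coset (`exists_light`).
-/

open Polynomial Finset

attribute [local instance 10] Classical.propDecidable

noncomputable section

namespace LRC

variable (F : Type) [Field F]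

/-- The linear functional `c ↦ ∑ i, c i * α ^ (i * t)` (evaluation at `α ^ t`). -/
def evalMap (n : ℕ) (α : F) (t : ℕ) : (Fin n → F) →ₗ[F] F :=
  ∑ i : Fin n, α ^ ((i : ℕ) * t) • LinearMap.proj i

/-- The cyclic code of length `n` with defining set of zeros `Z`
(`α` a primitive `n`-th root of unity). -/
def zeroCode (n : ℕ) (α : F) (Z : Set ℕ) : Submodule F (Fin n → F) :=
  ⨅ t ∈ Z, LinearMap.ker (evalMap F n α t)

/-- The polynomial `∑ i, c i • X ^ i` associated with a vector. -/
def polyEncode (n : ℕ) : (Fin n → F) →ₗ[F] Polynomial F :=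
  ∑ i : Fin n, (LinearMap.proj i).smulRight (Polynomial.X ^ (i : ℕ))

/-- The cyclic code of length `n` generated by the polynomial `g`. -/
def genCode (n : ℕ) (g : Polynomial F) : Submodule F (Fin n → F) where
  carrier := {c | g ∣ polyEncode F n c}
  add_mem' := fun {a b} ha hb => by
    simp only [Set.mem_setOf_eq, map_add] at *
    exact dvd_add ha hb
  zero_mem' := by simp only [Set.mem_setOf_eq, map_zero, dvd_zero]
  smul_mem' := fun a c hc => by
    simp only [Set.mem_setOf_eq, map_smul, Polynomial.smul_eq_C_mul] at *
    exact hc.mul_left _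

/-- The punctured (restricted) code of `C` on the coordinate set `S`. -/
def punctured {ι : Type} [Fintype ι] (C : Submodule F (ι → F)) (S : Finset ι) :
    Submodule F (↥S → F) :=
  C.map (LinearMap.funLeft F F (Subtype.val : ↥S → ι))

/-- The minimum distance of a (linear) code is at least `δ`. -/
def minDistGE {ι : Type} [Fintype ι] (C : Set (ι → F)) (δ : ℕ) : Prop :=
  ∀ c ∈ C, c ≠ 0 → δ ≤ hammingNorm c

/-- The minimum distance of a (linear) code equals `d`. -/
def minDistEq {ι : Type} [Fintype ι] (C : Set (ι → F)) (d : ℕ) : Prop :=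
  minDistGE F C d ∧ ∃ c ∈ C, c ≠ 0 ∧ hammingNorm c = d

/-- Locality `r`: each coordinate is a linear function of some `r` other coordinates. -/
def HasLocality {n : ℕ} (C : Set (Fin n → F)) (r : ℕ) : Prop :=
  ∀ i : Fin n, ∃ I : Finset (Fin n), i ∉ I ∧ I.card = r ∧
    ∃ a : Fin n → F, (∀ j ∉ I, a j = 0) ∧ ∀ c ∈ C, c i = ∑ j, a j * c j

/-- `(r, δ)` locality: every coordinate lies in a set of at most `r + δ - 1` coordinates on
which the punctured code has minimum distance at least `δ`. -/
def HasLocalityRD {ι : Type} [Fintype ι] (C : Submodule F (ι → F)) (r δ : ℕ) : Prop :=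
  ∀ i : ι, ∃ J : Finset ι, i ∈ J ∧ J.card ≤ r + δ - 1 ∧
    minDistGE F (punctured F C J : Set (↥J → F)) δ

end LRC

namespace LRC

/-! ### Arithmetic of the exponents -/

/-- The exponents `j * (r + 1) + l` with `j < m` and `l < r`. -/
def exps (m r : ℕ) : Finset ℕ :=
  (range m ×ˢ range r).image fun p => p.1 * (r + 1) + p.2

theorem mem_exps {m r s : ℕ} :
    s ∈ exps m r ↔ ∃ j l, j < m ∧ l < r ∧ s = j * (r + 1) + l := by
  simp only [exps, mem_image, mem_product, mem_range, Prod.exists]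
  constructor
  · rintro ⟨j, l, ⟨h1, h2⟩, h⟩
    exact ⟨j, l, h1, h2, h.symm⟩
  · rintro ⟨j, l, h1, h2, h⟩
    exact ⟨j, l, ⟨h1, h2⟩, h.symm⟩

theorem div_mod_exp {r l : ℕ} (j : ℕ) (hl : l < r) :
    (j * (r + 1) + l) / (r + 1) = j ∧ (j * (r + 1) + l) % (r + 1) = l := by
  constructor
  · rw [mul_comm, Nat.mul_add_div (by omega), Nat.div_eq_of_lt (by omega), add_zero]
  · rw [mul_comm, Nat.mul_add_mod, Nat.mod_eq_of_lt (by omega)]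

theorem exps_injOn (m r : ℕ) :
    Set.InjOn (fun p : ℕ × ℕ => p.1 * (r + 1) + p.2) (range m ×ˢ range r : Finset (ℕ × ℕ)) := by
  rintro ⟨j, l⟩ h ⟨j', l'⟩ h' e
  simp only [coe_product, coe_range, Set.mem_prod, Set.mem_Iio] at h h' e
  have h1 := div_mod_exp j h.2
  have h2 := div_mod_exp j' h'.2
  rw [e] at h1
  exact Prod.ext (h1.1.symm.trans h2.1) (h1.2.symm.trans h2.2)

theorem card_exps (m r : ℕ) : (exps m r).card = m * r := by
  rw [exps, card_image_of_injOn (exps_injOn m r), card_product, card_range, card_range]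

theorem exps_le {m r s : ℕ} (hs : s ∈ exps m r) : s + 2 ≤ m * (r + 1) := by
  obtain ⟨j, l, hj, hl, rfl⟩ := mem_exps.1 hs
  have : (j + 1) * (r + 1) ≤ m * (r + 1) := Nat.mul_le_mul_right _ hj
  rw [add_mul] at this
  omega

/-- An exponent `s < n` outside `exps m r` corresponds to a prescribed zero `n - s`. -/
theorem zero_of_not_mem_exps {m r v s : ℕ} (hs : s < (r + 1) * v)
    (h : s ∉ exps m r) :
    (∃ l < v, (r + 1) * v - s = 1 + l * (r + 1)) ∨
      (1 ≤ (r + 1) * v - s ∧ (r + 1) * v - s ≤ (r + 1) * v - m * (r + 1) + 1) := by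
  have hd := Nat.div_add_mod s (r + 1)
  have hm := Nat.mod_lt s (Nat.succ_pos r)
  by_cases hr : s % (r + 1) = r
  · left
    have hb : s / (r + 1) < v := by
      rw [Nat.div_lt_iff_lt_mul (by omega), mul_comm]; exact hs
    obtain ⟨w, rfl⟩ := Nat.exists_eq_add_of_lt hb
    refine ⟨w, Nat.lt_succ_of_le (Nat.le_add_left _ _), ?_⟩
    rw [hr] at hd
    have : (r + 1) * (s / (r + 1) + w + 1) = (r + 1) * (s / (r + 1)) + r + (1 + w * (r + 1)) := by
      ring
    omega
  · right
    have hm' : m ≤ s / (r + 1) := by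
      by_contra! hlt
      refine h (mem_exps.2 ⟨_, s % (r + 1), hlt, ?_, ?_⟩)
      · have : s % (r + 1) < r + 1 := hm
        omega
      · rw [mul_comm]; exact hd.symm
    have : m * (r + 1) ≤ s / (r + 1) * (r + 1) := Nat.mul_le_mul_right _ hm'
    rw [mul_comm (s / (r + 1))] at this
    omega

/-- The frequencies of the exponents and of the prescribed zeros never cancel modulo `n`. -/
theorem not_dvd_add {m r v s t : ℕ} (hmv : m * (r + 1) ≤ (r + 1) * v) (hs : s ∈ exps m r)
    (ht : (∃ l < v, t = 1 + l * (r + 1)) ∨ (1 ≤ t ∧ t ≤ (r + 1) * v - m * (r + 1) + 1)) :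
    ¬ (r + 1) * v ∣ t + s := by
  rcases ht with ⟨l, _, rfl⟩ | ⟨h1, h2⟩
  · intro hd
    have hd := (Dvd.intro _ rfl : (r + 1) ∣ (r + 1) * v).trans hd
    obtain ⟨j, l', _, hl', rfl⟩ := mem_exps.1 hs
    have e : 1 + l * (r + 1) + (j * (r + 1) + l') = (r + 1) * (l + j) + (l' + 1) := by ring
    rw [e, Nat.dvd_add_right (Dvd.intro _ rfl)] at hd
    have := Nat.le_of_dvd (by omega) hd
    omega
  · have := exps_le hs
    exact Nat.not_dvd_of_pos_of_lt (by omega) (by omega)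

/-! ### The code as an evaluation code -/

variable {F : Type} [Field F]

theorem geom_eq_zero {n : ℕ} {x : F} (hx : x ^ n = 1) (h1 : x ≠ 1) :
    ∑ s ∈ range n, x ^ s = 0 := by
  rw [geom_sum_eq h1, hx, sub_self, zero_div]

/-- Evaluation at `α ^ i`, `i < n`, of the polynomial with coefficient family `a` on the exponent
set `S`; the values of `a` outside `S` are ignored. -/
def evMap (n : ℕ) (α : F) (S : Finset ℕ) : (ℕ → F) →ₗ[F] (Fin n → F) where
  toFun a i := ∑ s ∈ S, a s * (α ^ (i : ℕ)) ^ s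
  map_add' a b := by
    ext i; simp [add_mul, sum_add_distrib]
  map_smul' a b := by
    ext i; simp [mul_sum, mul_assoc]

theorem evMap_apply (n : ℕ) (α : F) (S : Finset ℕ) (a : ℕ → F) (i : Fin n) :
    evMap n α S a i = ∑ s ∈ S, a s * (α ^ (i : ℕ)) ^ s := rfl

theorem mem_zeroCode {n : ℕ} {α : F} {Z : Set ℕ} {c : Fin n → F} :
    c ∈ zeroCode F n α Z ↔ ∀ t ∈ Z, ∑ i : Fin n, α ^ ((i : ℕ) * t) * c i = 0 := by
  simp [zeroCode, evalMap, Submodule.mem_iInf]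

/-- If `s ↦ n - s` carries the complement of `S` in `[0, n)` into `Z`, while `n ∤ t + s` for `t ∈ Z`
and `s ∈ S`, then the code with zeros `Z` is the evaluation code with exponents `S`. -/
theorem zeroCode_eq_range {n : ℕ} {α : F} (hα : IsPrimitiveRoot α n) (hn : (n : F) ≠ 0)
    {Z : Set ℕ} {S : Finset ℕ} (hS : S ⊆ range n)
    (h1 : ∀ s < n, s ∉ S → n - s ∈ Z) (h2 : ∀ s ∈ S, ∀ t ∈ Z, ¬ n ∣ t + s) :
    zeroCode F n α Z = LinearMap.range (evMap n α S) := by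
  have hn0 : n ≠ 0 := by rintro rfl; simp at hn
  have hα0 : α ≠ 0 := hα.ne_zero hn0
  ext c
  constructor
  · intro hc
    rw [mem_zeroCode] at hc
    refine ⟨fun s => (n : F)⁻¹ * ∑ j : Fin n, α ^ ((j : ℕ) * (n - s)) * c j, ?_⟩
    ext i
    rw [evMap_apply]
    -- Outside `S` the transform vanishes, so the sum may be extended to all frequencies.
    rw [sum_subset hS (fun s hs hs' => by rw [hc _ (h1 s (mem_range.1 hs) hs')]; simp)]
    have key : ∀ s ∈ range n,
        (n : F)⁻¹ * (∑ j : Fin n, α ^ ((j : ℕ) * (n - s)) * c j) * (α ^ (i : ℕ)) ^ s =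
          ∑ j : Fin n, (n : F)⁻¹ * c j * (α ^ (i : ℕ) / α ^ (j : ℕ)) ^ s := by
      intro s hs
      rw [mul_sum, sum_mul]
      refine sum_congr rfl fun j _ => ?_
      have : α ^ ((j : ℕ) * (n - s)) * (α ^ (j : ℕ)) ^ s = 1 := by
        rw [← pow_mul, ← pow_add, ← mul_add, Nat.sub_add_cancel (mem_range.1 hs).le, mul_comm,
          pow_mul, hα.pow_eq_one, one_pow]
      rw [div_pow, eq_div_of_mul_eq (by positivity) this]
      ring
    rw [sum_congr rfl key, sum_comm, sum_eq_single i]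
    · rw [div_self (pow_ne_zero _ hα0)]
      simp [hn]
    · intro j _ hji
      rw [← mul_sum, geom_eq_zero, mul_zero]
      · rw [div_pow, ← pow_mul, ← pow_mul, mul_comm, mul_comm (j : ℕ), pow_mul, pow_mul,
          hα.pow_eq_one]
        simp
      · intro h
        rw [div_eq_one_iff_eq (pow_ne_zero _ hα0)] at h
        exact hji (Fin.ext (hα.pow_inj i.2 j.2 h).symm)
    · simp
  · rintro ⟨a, rfl⟩
    rw [mem_zeroCode]
    intro t ht
    simp only [evMap_apply, mul_sum]
    rw [sum_comm]
    refine sum_eq_zero fun s hs => ?_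
    have : ∀ i : Fin n, α ^ ((i : ℕ) * t) * (a s * (α ^ (i : ℕ)) ^ s) =
        a s * (α ^ (t + s)) ^ (i : ℕ) := by
      intro i
      rw [← pow_mul, ← pow_mul, add_mul, pow_add, mul_comm t, mul_comm s]
      ring
    rw [sum_congr rfl fun i _ => this i, ← mul_sum,
      Fin.sum_univ_eq_sum_range (fun i => (α ^ (t + s)) ^ i), geom_eq_zero, mul_zero]
    · rw [← pow_mul, mul_comm, pow_mul, hα.pow_eq_one, one_pow]
    · rw [Ne, hα.pow_eq_one_iff_dvd]
      exact h2 s hs t ht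

/-! ### Weights and dimension -/

/-- A nonzero polynomial of degree at most `d`, here with coefficients `a` on `S`, vanishes at no more than `d`
of the `n`-th roots of unity. -/
theorem le_weight {n d : ℕ} {α : F} (hα : IsPrimitiveRoot α n) {S : Finset ℕ}
    (hS : ∀ s ∈ S, s ≤ d) {a : ℕ → F} (ha : ∃ s ∈ S, a s ≠ 0) :
    n ≤ hammingNorm (evMap n α S a) + d := by
  set p : F[X] := ∑ s ∈ S, C (a s) * X ^ s with hp
  have hcoef : ∀ s ∈ S, p.coeff s = a s := by
    intro s hs
    simp only [hp, finsetSum_coeff, coeff_C_mul, coeff_X_pow]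
    rw [sum_eq_single s]
    · simp
    · intro b _ hb; simp [hb.symm]
    · intro h; exact absurd hs h
  have hp0 : p ≠ 0 := by
    obtain ⟨s, hs, h⟩ := ha
    intro h0
    apply h
    rw [← hcoef s hs, h0, coeff_zero]
  have hdeg : p.natDegree ≤ d :=
    natDegree_sum_le_of_forall_le _ _ fun s hs => (natDegree_C_mul_X_pow_le _ _).trans (hS s hs)
  have hev : ∀ i : Fin n, evMap n α S a i = p.eval (α ^ (i : ℕ)) := by
    intro i
    simp [evMap_apply, hp, eval_finsetSum]
  have hz : (univ.filter fun i : Fin n => ¬ evMap n α S a i ≠ 0).card ≤ d := by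
    have hinj : Function.Injective fun i : Fin n => α ^ (i : ℕ) :=
      fun i j h => Fin.ext (hα.pow_inj i.2 j.2 h)
    rw [← card_image_of_injective _ hinj]
    refine le_trans ?_ hdeg
    refine (card_le_card ?_).trans ((Multiset.toFinset_card_le _).trans (card_roots' p))
    intro x hx
    obtain ⟨i, hi, rfl⟩ := mem_image.1 hx
    rw [mem_filter, not_not, hev] at hi
    rw [Multiset.mem_toFinset, mem_roots hp0]
    exact hi.2
  have := card_filter_add_card_filter_not (s := (univ : Finset (Fin n)))
    (fun i => evMap n α S a i ≠ 0)
  rw [card_univ, Fintype.card_fin] at this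
  have e : hammingNorm (evMap n α S a) =
      (univ.filter fun i : Fin n => evMap n α S a i ≠ 0).card := rfl
  omega

/-- The dimension of the evaluation code is the number of exponents, if these are below `n`. -/
theorem finrank_range_evMap {n : ℕ} {α : F} (hα : IsPrimitiveRoot α n) {S : Finset ℕ}
    (hS : S ⊆ range n) : Module.finrank F (LinearMap.range (evMap n α S)) = S.card := by
  let ext : (S → F) →ₗ[F] (ℕ → F) := Function.ExtendByZero.linearMap F Subtype.val
  have hext : ∀ (b : S → F) (s : S), ext b s = b s := fun b s =>
    Subtype.val_injective.extend_apply _ _ s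
  have hr : LinearMap.range (evMap n α S) = LinearMap.range (evMap n α S ∘ₗ ext) := by
    apply le_antisymm
    · rintro _ ⟨a, rfl⟩
      refine ⟨fun s => a s, ?_⟩
      ext i
      simp only [LinearMap.comp_apply, evMap_apply]
      exact sum_congr rfl fun s hs => by rw [hext _ ⟨s, hs⟩]
    · exact LinearMap.range_comp_le_range _ _
  rw [hr, LinearMap.finrank_range_of_inj, Module.finrank_fintype_fun_eq_card, Fintype.card_coe]
  rw [injective_iff_map_eq_zero]
  intro b hb
  by_contra hne
  obtain ⟨s, hs⟩ := Function.ne_iff.1 hne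
  have hlt := mem_range.1 (hS s.2)
  have := le_weight hα (d := n - 1) (S := S) (a := ext b)
    (fun s hs => by have := mem_range.1 (hS hs); omega) ⟨s, s.2, by rw [hext]; exact hs⟩
  rw [← LinearMap.comp_apply, hb, hammingNorm_zero] at this
  omega

/-! ### Locality -/

theorem hasLocality_evMap {m r v : ℕ} {α : F} (hα : IsPrimitiveRoot α ((r + 1) * v)) (hv : 0 < v) :
    HasLocality F
      (LinearMap.range (evMap ((r + 1) * v) α (exps m r)) : Set (Fin ((r + 1) * v) → F)) r := by
  intro i
  have hα0 : α ≠ 0 := hα.ne_zero (by positivity)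
  -- `J` is the residue class of `i` modulo `v`.
  let e : Fin (r + 1) ↪ Fin ((r + 1) * v) :=
    ⟨fun j => ⟨i % v + j * v, by
      have h1 := Nat.mod_lt (i : ℕ) hv
      have h2 : ((j : ℕ) + 1) * v ≤ (r + 1) * v := Nat.mul_le_mul_right _ j.2
      rw [add_mul, one_mul] at h2
      omega⟩, fun j j' h => by
        have h := congrArg Fin.val h
        simp only [add_right_inj] at h
        exact Fin.ext (Nat.eq_of_mul_eq_mul_right hv h)⟩
  set J : Finset (Fin ((r + 1) * v)) := univ.map e with hJ
  have hi : i ∈ J := by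
    rw [hJ, mem_map]
    refine ⟨⟨i / v, (Nat.div_lt_iff_lt_mul hv).2 i.2⟩, mem_univ _, Fin.ext ?_⟩
    exact Nat.mod_add_div' i v
  refine ⟨J.erase i, notMem_erase _ _, ?_, fun j => if j ∈ J.erase i then
    -(α ^ (j : ℕ) / α ^ (i : ℕ)) else 0, fun j hj => if_neg hj, ?_⟩
  · rw [card_erase_of_mem hi, hJ, card_map, card_univ, Fintype.card_fin, Nat.add_sub_cancel]
  rintro _ ⟨a, rfl⟩
  set c := evMap ((r + 1) * v) α (exps m r) a with hc
  -- The parity check supported on the residue class.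
  have hsum : ∑ j ∈ J, α ^ (j : ℕ) * c j = 0 := by
    simp only [hc, evMap_apply, mul_sum]
    rw [sum_comm]
    refine sum_eq_zero fun s hs => ?_
    rw [hJ, sum_map]
    have : ∀ j : Fin (r + 1), α ^ (e j : ℕ) * (a s * (α ^ (e j : ℕ)) ^ s) =
        a s * α ^ ((i % v : ℕ) * (s + 1)) * (α ^ (v * (s + 1))) ^ (j : ℕ) := by
      intro j
      have he : (e j : ℕ) = i % v + j * v := rfl
      rw [he]
      ring
    rw [sum_congr rfl fun j _ => this j, ← mul_sum,
      Fin.sum_univ_eq_sum_range (fun j => (α ^ (v * (s + 1))) ^ j), geom_eq_zero, mul_zero]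
    · rw [← pow_mul, hα.pow_eq_one_iff_dvd]
      exact ⟨s + 1, by ring⟩
    · rw [Ne, hα.pow_eq_one_iff_dvd, mul_comm, Nat.mul_dvd_mul_iff_left hv]
      obtain ⟨j, l, _, hl, rfl⟩ := mem_exps.1 hs
      rw [add_assoc, mul_comm j, Nat.dvd_add_right (Dvd.intro _ rfl)]
      exact Nat.not_dvd_of_pos_of_lt (by omega) (by omega)
  rw [← add_sum_erase _ _ hi] at hsum
  have h1 : ∑ j, (if j ∈ J.erase i then -(α ^ (j : ℕ) / α ^ (i : ℕ)) else 0) * c j =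
      ∑ j ∈ J.erase i, -(α ^ (j : ℕ) * c j) / α ^ (i : ℕ) := by
    simp only [ite_mul, zero_mul]
    rw [← sum_filter, filter_mem_eq_inter, univ_inter]
    exact sum_congr rfl fun j _ => by ring
  simp only []
  rw [h1, ← sum_div, sum_neg_distrib, eq_div_iff (pow_ne_zero _ hα0)]
  linear_combination hsum

/-! ### A codeword of minimum weight -/

/-- If `deg Q < m` and `deg g < r`, the coefficient of `X ^ s` in `Q (X ^ (r + 1)) * g` is read off from
the quotient and the remainder of `s` modulo `r + 1`. -/
theorem evMap_mul {n m r : ℕ} {α : F} {Q g : F[X]} (hQ : Q.natDegree < m) (hg : g.natDegree < r)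
    (i : Fin n) :
    evMap n α (exps m r) (fun s => Q.coeff (s / (r + 1)) * g.coeff (s % (r + 1))) i =
      Q.eval (α ^ ((i : ℕ) * (r + 1))) * g.eval (α ^ (i : ℕ)) := by
  rw [evMap_apply, exps, sum_image (exps_injOn m r), eval_eq_sum_range' hQ, eval_eq_sum_range' hg,
    sum_mul_sum, sum_product]
  refine sum_congr rfl fun j _ => sum_congr rfl fun l hl => ?_
  obtain ⟨e1, e2⟩ := div_mod_exp j (mem_range.1 hl)
  simp only [e1, e2]
  ring

/-- A nonzero codeword of low weight, with polynomial
`∏ j ∈ [1, m), (X ^ (r + 1) - α ^ (j * (r + 1))) * ∏ l < r - 1, (X - α ^ (l * v))`. -/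
theorem exists_light {m r v : ℕ} {α : F} (hα : IsPrimitiveRoot α ((r + 1) * v))
    (hm : 0 < m) (hr : 0 < r) (hv : 0 < v) :
    ∃ a : ℕ → F, (∃ s ∈ exps m r, a s ≠ 0) ∧
      hammingNorm (evMap ((r + 1) * v) α (exps m r) a) ≤ (r + 1) * (v - m) + 2 := by
  set Q : F[X] := ∏ j ∈ Finset.Ico 1 m, (X - C (α ^ (j * (r + 1)))) with hQ
  set g : F[X] := ∏ l ∈ range (r - 1), (X - C (α ^ (l * v))) with hg
  have hQm : Q.Monic := monic_prod_of_monic _ _ fun j _ => monic_X_sub_C _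
  have hgm : g.Monic := monic_prod_of_monic _ _ fun j _ => monic_X_sub_C _
  have hQd : Q.natDegree = m - 1 := by
    rw [hQ, natDegree_prod_of_monic _ _ fun j _ => monic_X_sub_C _]
    simp only [natDegree_X_sub_C, sum_const, smul_eq_mul, mul_one, Nat.card_Ico]
  have hgd : g.natDegree = r - 1 := by
    rw [hg, natDegree_prod_of_monic _ _ fun j _ => monic_X_sub_C _]
    simp only [natDegree_X_sub_C, sum_const, smul_eq_mul, mul_one, card_range]
  refine ⟨fun s => Q.coeff (s / (r + 1)) * g.coeff (s % (r + 1)), ?_, ?_⟩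
  · refine ⟨(m - 1) * (r + 1) + (r - 1), mem_exps.2 ⟨_, _, by omega, by omega, rfl⟩, ?_⟩
    obtain ⟨e1, e2⟩ := div_mod_exp (r := r) (l := r - 1) (m - 1) (by omega)
    simp only [e1, e2]
    rw [← hQd, ← hgd, hQm.coeff_natDegree, hgm.coeff_natDegree]
    simp
  · -- The nonzero positions lie in the residue classes `[m, v)` modulo `v`, apart from
    -- the last two members of the class of `0`.
    let T : Finset ℕ := ((range (r + 1) ×ˢ Finset.Ico m v).image fun p => p.1 * v + p.2) ∪
      {(r - 1) * v, r * v}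
    have hT : T.card ≤ (r + 1) * (v - m) + 2 := by
      refine (card_union_le _ _).trans (Nat.add_le_add ?_ card_le_two)
      refine card_image_le.trans ?_
      rw [card_product, card_range, Nat.card_Ico]
    refine le_trans ?_ hT
    rw [hammingNorm, ← card_map Fin.valEmbedding]
    refine card_le_card ?_
    intro x hx
    obtain ⟨i, hi, rfl⟩ := mem_map.1 hx
    rw [mem_filter, evMap_mul (by omega) (by omega)] at hi
    obtain ⟨hQi, hgi⟩ := mul_ne_zero_iff.1 hi.2
    rw [Fin.valEmbedding_apply]
    have hd := Nat.div_add_mod' (i : ℕ) v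
    have hlt := Nat.mod_lt (i : ℕ) hv
    have hdiv : (i : ℕ) / v < r + 1 := (Nat.div_lt_iff_lt_mul hv).2 i.2
    rcases Nat.lt_or_ge ((i : ℕ) % v) m with h | h
    · have h0 : (i : ℕ) % v = 0 := by
        by_contra h0
        apply hQi
        rw [hQ, eval_prod]
        refine prod_eq_zero (i := (i : ℕ) % v) (by rw [Finset.mem_Ico]; omega) ?_
        rw [eval_sub, eval_X, eval_C, sub_eq_zero]
        have : (i : ℕ) * (r + 1) = (r + 1) * v * (i / v) + i % v * (r + 1) := by
          conv_lhs => rw [← hd]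
          ring
        rw [this, pow_add, pow_mul, hα.pow_eq_one, one_pow, one_mul]
      have hge : r - 1 ≤ (i : ℕ) / v := by
        by_contra! hlt'
        apply hgi
        rw [hg, eval_prod]
        refine prod_eq_zero (i := (i : ℕ) / v) (mem_range.2 hlt') ?_
        rw [eval_sub, eval_X, eval_C, sub_eq_zero]
        congr 1
        omega
      apply mem_union_right
      rw [mem_insert, mem_singleton]
      have : (i : ℕ) / v = r - 1 ∨ (i : ℕ) / v = r := by omega
      rcases this with h' | h' <;> rw [h'] at hd <;> omega
    · apply mem_union_left
      refine mem_image.2 ⟨((i : ℕ) / v, (i : ℕ) % v), ?_, hd⟩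
      rw [mem_product, mem_range, Finset.mem_Ico]
      exact ⟨hdiv, h, hlt⟩

end LRC

/-- Optimal cyclic LRC codes, Tamo–Barg cyclic construction. -/
theorem statement1 (q n k r : ℕ) (F : Type) [Field F] [Fintype F]
    (hq : ∃ p s : ℕ, p.Prime ∧ 0 < s ∧ q = p ^ s)
    (hcard : Fintype.card F = q)
    (hn : 0 < n) (hk : 0 < k) (hr : 0 < r)
    (hrn : (r + 1) ∣ n) (hrk : r ∣ k) (hrk' : r ≤ k)
    (hkn : k / r * (r + 1) ≤ n) (hnq : n ∣ q - 1)
    (α : F) (hα : IsPrimitiveRoot α n)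
    (Z : Set ℕ)
    (hZ : Z = {t | ∃ l < n / (r + 1), t = 1 + l * (r + 1)} ∪
              {t | 1 ≤ t ∧ t ≤ n - k / r * (r + 1) + 1})
    (C : Submodule F (Fin n → F)) (hC : C = LRC.zeroCode F n α Z) :
    Module.finrank F C = k ∧
    LRC.HasLocality F (C : Set (Fin n → F)) r ∧
    LRC.minDistEq F (C : Set (Fin n → F)) (n - k - k / r + 2) := by
  obtain ⟨v, rfl⟩ := hrn
  obtain ⟨m, rfl⟩ := hrk
  have hm : 0 < m := Nat.pos_of_mul_pos_left hk
  have hv : 0 < v := Nat.pos_of_mul_pos_left hn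
  rw [Nat.mul_div_cancel_left _ hr] at hkn hZ ⊢
  rw [Nat.mul_div_cancel_left _ (Nat.succ_pos r)] at hZ
  -- A primitive `n`-th root of unity exists only when the characteristic does not divide `n`.
  have hnF : (((r + 1) * v : ℕ) : F) ≠ 0 := by
    have : NeZero ((r + 1) * v) := ⟨hn.ne'⟩
    exact (hα.neZero').out
  have hS : LRC.exps m r ⊆ range ((r + 1) * v) := fun s hs => by
    have := LRC.exps_le hs
    rw [mem_range]
    omega
  have hCr : C = LinearMap.range (LRC.evMap ((r + 1) * v) α (LRC.exps m r)) := by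
    rw [hC]
    refine LRC.zeroCode_eq_range hα hnF hS ?_ ?_
    · intro s hs h
      rw [hZ]
      exact LRC.zero_of_not_mem_exps hs h
    · intro s hs t ht
      rw [hZ] at ht
      exact LRC.not_dvd_add hkn hs ht
  have hd : ∀ s ∈ LRC.exps m r, s ≤ m * (r + 1) - 2 := fun s hs => by
    have := LRC.exps_le hs
    omega
  have hexp : m * (r + 1) = r * m + m := by ring
  have hrm : m ≤ r * m := Nat.le_mul_of_pos_left m hr
  have hlow : ∀ a : ℕ → F, (∃ s ∈ LRC.exps m r, a s ≠ 0) → (r + 1) * v - r * m - m + 2 ≤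
      hammingNorm (LRC.evMap ((r + 1) * v) α (LRC.exps m r) a) := by
    intro a ha
    have := LRC.le_weight hα hd ha
    omega
  subst hCr
  refine ⟨?_, LRC.hasLocality_evMap hα hv, ?_, ?_⟩
  · rw [LRC.finrank_range_evMap hα hS, LRC.card_exps, mul_comm]
  · rintro _ ⟨a, rfl⟩ hne
    refine hlow a ?_
    by_contra! h0
    apply hne
    ext i
    rw [LRC.evMap_apply]
    exact sum_eq_zero fun s hs => by rw [h0 s hs, zero_mul]
  · obtain ⟨a, ha, hw⟩ := LRC.exists_light hα hm hr hv
    have hge := hlow a ha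
    refine ⟨_, ⟨a, rfl⟩, ?_, le_antisymm ?_ hge⟩
    · intro h0
      rw [h0, hammingNorm_zero] at hge
      omega
    · refine hw.trans ?_
      rw [Nat.mul_sub, mul_comm (r + 1) m]
      omega
end
end

section
/- Let q be a prime power, let n | (q-1) with n = νm, let α ∈ F_q be a primitive n-th root of unity, and fix δ ∈ {2,…,m}. Let Z be a set with {1,…,δ-1} ⊆ Z ⊆ {0,…,m-1}, put L = ∪_{s=0}^{ν-1}(Z + sm), let g(x) = p(x)·Π_{t∈L}(x - α^t) divide x^n - 1, let C = ⟨g⟩ be the corresponding cyclic code of length n, and let C^{(0)} = {(c_0, c_ν, …, c_{(m-1)ν}) : c ∈ C}. If for every u ∈ {0,…,m-1}\Z there exists s ∈ {0,…,ν-1} such that g(α^{u+sm}) ≠ 0, then dim C^{(0)} = m - |Z|. -/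
/-!
Restricting to the coordinates divisible by `ν` folds frequencies modulo `m`: with `α ^ ν` a
primitive `m`-th root of unity, the frequencies `u + s * m` (`s < ν`) all restrict to `u`.

*Upper bound.* Let `c` be a codeword and `t ∈ Z`. Adding the equations `c (α ^ (t + s * m)) = 0`
over `s < ν` kills every coordinate not divisible by `ν` and multiplies the others by `ν`, which is
nonzero in `F`. Hence the restriction `d` of `c` satisfies `∑ x, d x * α ^ (x * t) = 0` for `t ∈ Z`
(`sum_eq_zero_of_mem`). A vector on the `m` coordinates with this sum equal to zero for all `t < m`
is zero by Vandermonde, so the restricted code embeds in the functions on `{0, …, m - 1} \ Z`.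

*Lower bound.* For `u ∉ Z` choose `s` with `g (α ^ (u + s * m)) ≠ 0`, and put `t = u + s * m`.
The polynomial `∑ i, (α ^ t)⁻¹ ^ i * X ^ i` times `(α ^ t)⁻¹ * X - 1` is `X ^ n - 1`, and
`g` is coprime to the linear factor, so this polynomial is a codeword (`character_mem_genCode`). Its
restriction is the character `x ↦ (α ^ u)⁻¹ ^ x`; for distinct `u < m` these are linearly independent,
again by Vandermonde.
-/

open Polynomial Finset

attribute [local instance 10] Classical.propDecidable

noncomputable section

namespace LRC

variable {F : Type} [Field F]

theorem polyEncode_apply (n : ℕ) (c : Fin n → F) :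
    polyEncode F n c = ∑ i : Fin n, C (c i) * X ^ (i : ℕ) := by
  simp [polyEncode, LinearMap.sum_apply, smul_eq_C_mul]

theorem fourier_det_ne_zero {m : ℕ} {γ : F} (hγ : IsPrimitiveRoot γ m) :
    (Matrix.vandermonde fun j : Fin m => γ ^ (j : ℕ)).det ≠ 0 := by
  rw [Matrix.det_vandermonde_ne_zero_iff]
  intro i j hij
  exact Fin.ext (hγ.pow_inj i.2 j.2 hij)

theorem character_mem_genCode {n : ℕ} {g : F[X]} (hgdvd : g ∣ X ^ n - 1) {b : F} (hb : b ^ n = 1)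
    (hb0 : b ≠ 0) (hgb : g.eval b ≠ 0) :
    (fun i : Fin n => b⁻¹ ^ (i : ℕ)) ∈ genCode F n g := by
  change g ∣ polyEncode F n _
  have hpoly : polyEncode F n (fun i : Fin n => b⁻¹ ^ (i : ℕ)) =
      ∑ i ∈ Finset.range n, (C b⁻¹ * X) ^ i := by
    rw [polyEncode_apply, ← Fin.sum_univ_eq_sum_range (fun i => (C b⁻¹ * X : F[X]) ^ i)]
    exact Finset.sum_congr rfl fun i _ => by rw [mul_pow, ← C_pow]
  have hmul : (∑ i ∈ Finset.range n, (C b⁻¹ * X : F[X]) ^ i) * (C b⁻¹ * X - 1) = X ^ n - 1 := by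
    rw [geom_sum_mul, mul_pow, ← C_pow, inv_pow, hb]
    simp
  have hlin : (C b⁻¹ * X - 1 : F[X]) = C b⁻¹ * (X - C b) := by
    rw [mul_sub, ← C_mul, inv_mul_cancel₀ hb0, C_1]
  have hcop : IsCoprime g (C b⁻¹ * X - 1) := by
    rw [hlin]
    have h1 : IsCoprime (X - C b) g := by
      rw [(irreducible_X_sub_C b).coprime_iff_not_dvd, dvd_iff_isRoot]
      exact hgb
    have hu : IsUnit (C b⁻¹ : F[X]) := isUnit_C.mpr (inv_ne_zero hb0).isUnit
    exact (isCoprime_mul_unit_left_right hu _ _).mpr h1.symm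
  rw [hpoly]
  exact hcop.dvd_of_dvd_mul_right (hmul ▸ hgdvd)

/-- If `c` vanishes at all `α ^ (t + s * m)` with `s < ν`, then the part of `c` supported on the
multiples of `ν` vanishes at `α ^ t`. -/
theorem sum_eq_zero_of_mem {n ν m : ℕ} (hn : 0 < n) (hnm : n = ν * m) {α : F}
    (hα : IsPrimitiveRoot α n) (S : Finset (Fin n)) (hS : ∀ x, x ∈ S ↔ ν ∣ (x : ℕ)) (t : ℕ)
    (c : Fin n → F) (hc : ∀ s < ν, (polyEncode F n c).eval (α ^ (t + s * m)) = 0) :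
    ∑ x ∈ S, c x * α ^ ((x : ℕ) * t) = 0 := by
  have : NeZero n := ⟨hn.ne'⟩
  have hm : 0 < m := Nat.pos_of_ne_zero (by rintro rfl; simp at hnm; omega)
  have hν : (ν : F) ≠ 0 := by
    have h := (hα.neZero').out
    rw [hnm, Nat.cast_mul] at h
    exact left_ne_zero_of_mul h
  have hgeom : ∀ i : ℕ, ∑ s ∈ Finset.range ν, (α ^ (i * m)) ^ s = if ν ∣ i then (ν : F) else 0 := by
    intro i
    have hiff : α ^ (i * m) = 1 ↔ ν ∣ i := by
      rw [hα.pow_eq_one_iff_dvd, hnm, Nat.mul_dvd_mul_iff_right hm]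
    split_ifs with h
    · simp [hiff.mpr h]
    · have h1 : α ^ (i * m) - 1 ≠ 0 := sub_ne_zero.mpr (mt hiff.mp h)
      refine (mul_eq_zero.mp ?_).resolve_right h1
      rw [geom_sum_mul, ← pow_mul, mul_assoc, mul_comm m ν, ← hnm, mul_comm i n, pow_mul,
        hα.pow_eq_one, one_pow, sub_self]
  have hsum : ∑ s ∈ Finset.range ν, (polyEncode F n c).eval (α ^ (t + s * m)) = 0 :=
    Finset.sum_eq_zero fun s hs => hc s (Finset.mem_range.mp hs)
  have hfold : ∑ s ∈ Finset.range ν, (polyEncode F n c).eval (α ^ (t + s * m)) =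
      ν * ∑ x ∈ S, c x * α ^ ((x : ℕ) * t) := by
    simp only [polyEncode_apply, eval_finsetSum, eval_mul, eval_C, eval_pow, eval_X]
    rw [Finset.sum_comm]
    have hSf : S = Finset.univ.filter fun x : Fin n => ν ∣ (x : ℕ) := by
      ext x; simp [hS]
    rw [hSf, Finset.sum_filter, Finset.mul_sum]
    refine Finset.sum_congr rfl fun i _ => ?_
    have : ∀ s, c i * (α ^ (t + s * m)) ^ (i : ℕ) =
        c i * α ^ ((i : ℕ) * t) * (α ^ ((i : ℕ) * m)) ^ s := fun s => by ring
    simp only [this]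
    rw [← Finset.mul_sum, hgeom]
    split_ifs <;> ring
  exact (mul_eq_zero.mp (hfold ▸ hsum)).resolve_left hν

/-- The enumeration `j ↦ j * ν` of the multiples of `ν` below `n = ν * m`. -/
theorem exists_equiv {n ν m : ℕ} (hn : 0 < n) (hnm : n = ν * m) (S : Finset (Fin n))
    (hS : ∀ x, x ∈ S ↔ ν ∣ (x : ℕ)) :
    ∃ e : Fin m ≃ S, ∀ j, ((e j : Fin n) : ℕ) = j * ν := by
  have hν : 0 < ν := Nat.pos_of_ne_zero (by rintro rfl; simp at hnm; omega)
  have hlt : ∀ j : Fin m, (j : ℕ) * ν < n := fun j => by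
    rw [hnm, mul_comm]; exact Nat.mul_lt_mul_of_pos_left j.2 hν
  let f : Fin m → S := fun j => ⟨⟨j * ν, hlt j⟩, (hS _).mpr (Dvd.intro_left _ rfl)⟩
  have hf : Function.Bijective f := by
    constructor
    · intro i j hij
      have h : (i : ℕ) * ν = j * ν := congrArg (fun x : S => ((x : Fin n) : ℕ)) hij
      exact Fin.ext (Nat.eq_of_mul_eq_mul_right hν h)
    · rintro ⟨x, hx⟩
      obtain ⟨k, hk⟩ := (hS x).mp hx
      have hkm : k < m := by
        refine Nat.lt_of_mul_lt_mul_left (a := ν) ?_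
        rw [← hk, ← hnm]
        exact x.2
      refine ⟨⟨k, hkm⟩, Subtype.ext (Fin.ext ?_)⟩
      simp [f, hk, mul_comm]
  exact ⟨Equiv.ofBijective f hf, fun j => rfl⟩

theorem finrank_punctured {n ν m : ℕ} (hn : 0 < n) (hnm : n = ν * m) {α : F}
    (hα : IsPrimitiveRoot α n) {Z : Finset ℕ} (hZup : ∀ t ∈ Z, t < m) {g : F[X]}
    (hgdvd : g ∣ X ^ n - 1) (hroot : ∀ s < ν, ∀ t ∈ Z, g.eval (α ^ (t + s * m)) = 0)
    (hnondeg : ∀ u < m, u ∉ Z → ∃ s < ν, g.eval (α ^ (u + s * m)) ≠ 0)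
    (S : Finset (Fin n)) (hS : ∀ x, x ∈ S ↔ ν ∣ (x : ℕ)) :
    Module.finrank F (punctured F (genCode F n g) S) = m - Z.card := by
  obtain ⟨e, he⟩ := exists_equiv hn hnm S hS
  have hα0 : α ≠ 0 := hα.ne_zero hn.ne'
  have hβ : IsPrimitiveRoot (α ^ ν) m := hα.pow hn hnm
  let U := {u : Fin m // (u : ℕ) ∉ Z}
  have hcard : Fintype.card U = m - Z.card := by
    have hZ : (Finset.univ.filter fun u : Fin m => (u : ℕ) ∈ Z).card = Z.card := by
      refine Finset.card_bij (fun u _ => (u : ℕ)) (by simp) (fun a _ b _ h => Fin.ext h) ?_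
      intro t ht
      exact ⟨⟨t, hZup t ht⟩, by simpa using ht, rfl⟩
    rw [Fintype.card_subtype_compl, Fintype.card_fin, Fintype.card_subtype, hZ]
  rw [← hcard]
  apply le_antisymm
  · let Φ : (S → F) →ₗ[F] (U → F) :=
      LinearMap.pi fun u => ∑ x : S, α ^ (((x : Fin n) : ℕ) * u.1) • LinearMap.proj x
    have hΦ : ∀ d u, Φ d u = ∑ x : S, d x * α ^ (((x : Fin n) : ℕ) * u.1) := fun d u => by
      simp [Φ, LinearMap.sum_apply, mul_comm]
    have hinj : Function.Injective (Φ.domRestrict (punctured F (genCode F n g) S)) := by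
      rw [injective_iff_map_eq_zero]
      rintro ⟨d, hd⟩ h0
      obtain ⟨c, hc, rfl⟩ := hd
      have hall : ∀ u : Fin m, ∑ x : S, c x * α ^ (((x : Fin n) : ℕ) * u) = 0 := by
        intro u
        by_cases hu : (u : ℕ) ∈ Z
        · have h := sum_eq_zero_of_mem hn hnm hα S hS u c
            fun s hs => eval_eq_zero_of_dvd_of_eval_eq_zero hc (hroot s hs u hu)
          rwa [← Finset.sum_coe_sort] at h
        · have h := congrFun h0 ⟨u, hu⟩
          rw [LinearMap.domRestrict_apply, hΦ] at h
          exact h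
      have hvec : Matrix.vecMul (fun j => c (e j))
          (Matrix.vandermonde fun j : Fin m => (α ^ ν) ^ (j : ℕ)) = 0 := by
        funext u
        refine Eq.trans ?_ ((e.sum_comp fun x : S => c x * α ^ (((x : Fin n) : ℕ) * u)).trans (hall u))
        change ∑ j : Fin m, _ = ∑ j : Fin m, _
        refine Finset.sum_congr rfl fun j _ => ?_
        change c (e j) * ((α ^ ν) ^ (j : ℕ)) ^ (u : ℕ) = _
        rw [he]
        ring
      have hz := Matrix.eq_zero_of_vecMul_eq_zero (fourier_det_ne_zero hβ) hvec
      refine Subtype.ext (funext fun x => ?_)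
      have := congrFun hz (e.symm x)
      simpa using this
    calc _ ≤ Module.finrank F (U → F) := LinearMap.finrank_le_finrank_of_injective hinj
      _ = _ := by simp
  · have hmem : ∀ u : U, (fun x : S => (α ^ (u.1 : ℕ))⁻¹ ^ ((x : Fin n) : ℕ)) ∈
        punctured F (genCode F n g) S := by
      rintro ⟨u, hu⟩
      obtain ⟨s, -, hs⟩ := hnondeg u u.2 hu
      refine ⟨_, character_mem_genCode hgdvd ?_ (pow_ne_zero _ hα0) hs, ?_⟩
      · rw [← pow_mul, mul_comm, pow_mul, hα.pow_eq_one, one_pow]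
      · funext x
        obtain ⟨k, hk⟩ := (hS x).mp x.2
        change (α ^ ((u : ℕ) + s * m))⁻¹ ^ ((x : Fin n) : ℕ) = _
        -- the factor `α ^ (s * m * x)` is trivial because `n = ν * m` divides `m * x`
        have h1 : (α ^ (s * m)) ^ ((x : Fin n) : ℕ) = 1 := by
          rw [← pow_mul, hα.pow_eq_one_iff_dvd, hk, hnm]
          exact ⟨s * k, by ring⟩
        rw [inv_pow, inv_pow, pow_add, mul_pow, h1, mul_one]
    have hli : LinearIndependent F fun u : U =>
        (⟨_, hmem u⟩ : punctured F (genCode F n g) S) := by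
      let restr : punctured F (genCode F n g) S →ₗ[F] (Fin m → F) :=
        (LinearMap.funLeft F F e).comp (punctured F (genCode F n g) S).subtype
      apply LinearIndependent.of_comp restr
      have hcols := Matrix.linearIndependent_cols_of_det_ne_zero
        (fourier_det_ne_zero hβ.inv)
      have heq : (restr ∘ fun u : U => (⟨_, hmem u⟩ : punctured F (genCode F n g) S)) =
          (Matrix.vandermonde fun j : Fin m => (α ^ ν)⁻¹ ^ (j : ℕ)).col ∘
            fun u : U => u.1 := by
        funext u j
        change (α ^ (u.1 : ℕ))⁻¹ ^ ((e j : Fin n) : ℕ) = ((α ^ ν)⁻¹ ^ (j : ℕ)) ^ (u.1 : ℕ)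
        rw [he]
        simp only [inv_pow, ← pow_mul]
        congr 2
        ring
      rw [heq]
      exact hcols.comp _ Subtype.val_injective
    exact hli.fintype_card_le_finrank

end LRC

/-- Exact dimension of the local code. -/
theorem statement4 (q n ν m δ : ℕ) (F : Type) [Field F] [Fintype F]
    (hq : ∃ p s : ℕ, p.Prime ∧ 0 < s ∧ q = p ^ s)
    (hcard : Fintype.card F = q)
    (hnq : n ∣ q - 1) (hn : 0 < n) (hnm : n = ν * m)
    (α : F) (hα : IsPrimitiveRoot α n)
    (hδ2 : 2 ≤ δ) (hδm : δ ≤ m)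
    (Z : Finset ℕ)
    (hZlow : ∀ t, 1 ≤ t → t ≤ δ - 1 → t ∈ Z) (hZup : ∀ t ∈ Z, t < m)
    (p g : Polynomial F)
    (hg : g = p * ∏ s ∈ Finset.range ν, ∏ t ∈ Z, (Polynomial.X - Polynomial.C (α ^ (t + s * m))))
    (hgdvd : g ∣ Polynomial.X ^ n - 1)
    (C : Submodule F (Fin n → F)) (hC : C = LRC.genCode F n g)
    (hnondeg : ∀ u < m, u ∉ Z → ∃ s < ν, Polynomial.eval (α ^ (u + s * m)) g ≠ 0) :
    Module.finrank F
      (LRC.punctured F C (Finset.univ.filter fun x : Fin n => ∃ s < m, (x : ℕ) = s * ν)) =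
        m - Z.card := by
  subst hC
  have hν : 0 < ν := Nat.pos_of_ne_zero (by rintro rfl; simp at hnm; omega)
  refine LRC.finrank_punctured hn hnm hα hZup hgdvd ?_ hnondeg _ ?_
  · intro s hs t ht
    rw [hg, eval_mul, eval_prod, Finset.prod_eq_zero (Finset.mem_range.mpr hs), mul_zero]
    rw [eval_prod]
    exact Finset.prod_eq_zero ht (by simp)
  · intro x
    simp only [Finset.mem_filter, Finset.mem_univ, true_and]
    constructor
    · rintro ⟨s, -, hs⟩
      exact ⟨s, by rw [hs, mul_comm]⟩
    · rintro ⟨k, hk⟩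
      refine ⟨k, ?_, by rw [hk, mul_comm]⟩
      refine Nat.lt_of_mul_lt_mul_left (a := ν) ?_
      rw [← hk, ← hnm]
      exact x.2
end
end

section
/- With the hierarchical parameter recursion below, for every 1 ≤ i ≤ h+1 one has δ_1 ≡ δ_i - b_0^{(i-1)} (mod n_1), i.e., δ_1 = (δ_i - b_0^{(i-1)}) mod n_1. -/
/-!
Every `n j` is a multiple of `n 1`, because `n (j + 1) = ν j * n j`. Hence, in the recursion for `δ`,
all terms carrying a factor `n j` vanish modulo `n 1`, and `δ (i + 1) - b' i 0` is congruent to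
`δ i - b' (i - 1) 0`. By induction this difference stays congruent to `δ 1 - b' 0 0 = δ 1`. Finally
`δ 1` is its own residue, since `n 1 = r 1 + δ 1 - 1` exceeds `δ 1` when `r 1 > 1`.
-/

/-- `δ_1 = (δ_i - b_0^{(i-1)}) mod n_1`. -/
theorem statement7 (h : ℕ) (hh : 1 ≤ h)
    (r ν a b n δ : ℕ → ℕ) (b' u' : ℕ → ℕ → ℕ)
    (hr1 : 1 < r 1)
    (hrmono : ∀ i, 1 ≤ i → i ≤ h → r i < r (i + 1))
    (hδ1 : 1 < δ 1)
    (hn1 : n 1 = r 1 + δ 1 - 1)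
    (hν : ∀ i, 1 ≤ i → i ≤ h → (r (i + 1) + r i - 1) / r i ≤ ν i)
    (hnrec : ∀ i, 1 ≤ i → i ≤ h → n (i + 1) = ν i * n i)
    (hab : ∀ i, 1 ≤ i → i ≤ h → r (i + 1) + b i = a i * r i ∧ b i < r i)
    (hbii : ∀ i, 1 ≤ i → i ≤ h → b' i i = b i)
    (hbrec : ∀ i, 1 ≤ i → i ≤ h → ∀ j, 2 ≤ j → j ≤ i →
      b' i j = u' i (j - 1) * r (j - 1) + b' i (j - 1) ∧ b' i (j - 1) < r (j - 1))
    (hb00 : b' 0 0 = 0)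
    (hb0 : ∀ i, 1 ≤ i → i ≤ h →
      b' i 0 = (b' i 1 + b' (i - 1) 0) % r 1 ∧
      u' i 0 = (b' i 1 + b' (i - 1) 0) / r 1)
    (hδrec : ∀ i, 1 ≤ i → i ≤ h →
      δ (i + 1) + b' (i - 1) 0 =
        (ν i - a i) * n i + δ i + (∑ j ∈ Finset.Icc 1 (i - 1), u' i j * n j) +
          u' i 0 * n 1 + b' i 0)
    :
    ∀ i, 1 ≤ i → i ≤ h + 1 →
      (δ 1 : ℤ) = ((δ i : ℤ) - (b' (i - 1) 0 : ℤ)) % (n 1 : ℤ) := by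
  have hdvd : ∀ j, 1 ≤ j → j ≤ h + 1 → n 1 ∣ n j := by
    intro j hj
    induction j, hj using Nat.le_induction with
    | base => intro _; exact dvd_rfl
    | succ j hj ih =>
      intro hjh
      rw [hnrec j hj (by omega)]
      exact Dvd.dvd.mul_left (ih (by omega)) _
  intro i hi
  induction i, hi using Nat.le_induction with
  | base =>
    intro _
    have hlt : (δ 1 : ℤ) < n 1 := by omega
    simp only [Nat.sub_self, hb00, Nat.cast_zero, sub_zero]
    exact (Int.emod_eq_of_lt (by positivity) hlt).symm
  | succ i hi ih =>
    intro hih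
    have hsum : n 1 ∣ (ν i - a i) * n i + (∑ j ∈ Finset.Icc 1 (i - 1), u' i j * n j) +
        u' i 0 * n 1 := by
      refine dvd_add (dvd_add (Dvd.dvd.mul_left (hdvd i hi (by omega)) _) ?_)
        (dvd_mul_left _ _)
      refine Finset.dvd_sum fun j hj => Dvd.dvd.mul_left (hdvd j ?_ ?_) _ <;>
        (rw [Finset.mem_Icc] at hj; omega)
    obtain ⟨k, hk⟩ := hsum
    have hrec := hδrec i hi (by omega)
    have hstep : δ (i + 1) + b' (i - 1) 0 = n 1 * k + δ i + b' i 0 := by omega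
    have hstep' : (δ (i + 1) : ℤ) - b' i 0 = (δ i - b' (i - 1) 0) + n 1 * k := by
      zify at hstep
      linarith
    rw [Nat.add_sub_cancel, hstep', Int.add_mul_emod_self_left]
    exact ih (by omega)
end

section
/- With the hierarchical parameter recursion below, suppose that for every s with 2 ≤ s ≤ h the following conditions hold: ⌈r_{s+1}/r_s⌉·⌈r_s/r_1⌉ - ⌈r_{s+1}/r_1⌉ = u_0^{(s)} + u_1^{(s)} + Σ_{j=2}^{s-1} u_j^{(s)}·⌈r_j/r_1⌉, and, for every l with 2 ≤ l ≤ s-1, ⌈r_{s+1}/r_s⌉·⌈r_s/r_l⌉ - ⌈r_{s+1}/r_l⌉ = u_l^{(s)} + Σ_{j=l+1}^{s-1} u_j^{(s)}·⌈r_j/r_l⌉. Then for every 1 ≤ i ≤ h, δ_{i+1} = n_{i+1} - r_{i+1} + δ_i - Σ_{l=1}^{i} ⌈r_{i+1}/r_l⌉ (δ_l - δ_{l-1}), where δ_0 = 1. -/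
/-!
Write `D l = δ l - δ (l - 1)` and `c j l = ⌈r j / r l⌉`. Since `c (i + 1) (i + 1) = 1`, the claim for
`i` is the identity `n m = r m + ∑_{l ≤ m} c m l * D l` at `m = i + 1`, and this is proved for all
`m` by strong induction. The recursion for `δ`, after eliminating `b' i 0`, reads
`D (i + 1) + u' i 0 * r 1 = (ν i - a i) * n i + ∑_{j < i} u' i j * n j + u' i 0 * n 1 + b' i 1`.
Expressing each `n j`, `j ≤ i`, through the induction hypothesis, the terms free of `D` are
matched by the expansion `b i = ∑_{j < i} u' i j * r j + b' i 1` (`mixed_radix_expansion`), and the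
coefficients of each `D l` by the ceiling conditions (`opt_coeff_sum`).

The truncated subtractions are harmless: `a i = ⌈r (i + 1) / r i⌉ ≤ ν i`, and `δ` is nondecreasing
because `n 1 ≥ r 1`.
-/

/-- Ceiling of the division of natural numbers: `cld a b = ⌈a/b⌉`. -/
def cld (a b : ℕ) : ℕ := (a + b - 1) / b

lemma cld_self {x : ℕ} (hx : 0 < x) : cld x x = 1 := by
  unfold cld
  rw [show x + x - 1 = (x - 1) + x by omega, Nat.add_div_right _ hx,
    Nat.div_eq_of_lt (by omega)]

lemma cld_eq_of_add_eq {x y a b : ℕ} (h : x + b = a * y) (hb : b < y) : cld x y = a := by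
  unfold cld
  rw [show x + y - 1 = (y - 1 - b) + a * y by omega, Nat.add_mul_div_right _ _ (by omega),
    Nat.div_eq_of_lt (by omega), zero_add]

/-- The successive divisions by `r k, …, r 1` telescope to a mixed-radix expansion. -/
lemma mixed_radix_expansion (u r β : ℕ → ℕ) (k : ℕ)
    (hβ : ∀ j, 1 ≤ j → j ≤ k → β (j + 1) = u j * r j + β j) :
    β (k + 1) = (∑ j ∈ Finset.Icc 1 k, u j * r j) + β 1 := by
  induction k with
  | zero => simp
  | succ k ih =>
    rw [Finset.sum_Icc_succ_top (by omega), hβ (k + 1) (by omega) le_rfl,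
      ih fun j h1 h2 => hβ j h1 (by omega)]
    ring

/-- Exchange of summation over the triangle `1 ≤ l ≤ j ≤ k`. -/
lemma sum_triangle_swap (u D : ℕ → ℕ) (c : ℕ → ℕ → ℕ) (k : ℕ) :
    ∑ j ∈ Finset.Icc 1 k, u j * (∑ l ∈ Finset.Icc 1 j, c j l * D l) =
      ∑ l ∈ Finset.Icc 1 k, (∑ j ∈ Finset.Icc l k, u j * c j l) * D l := by
  simp_rw [Finset.mul_sum, Finset.sum_mul]
  rw [Finset.sum_comm' (t' := Finset.Icc 1 k) (s' := fun l => Finset.Icc l k)]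
  · simp only [mul_assoc]
  · intro x y
    simp only [Finset.mem_Icc]
    omega

/-- The ceiling conditions at level `k + 1`, weighted by `D l` and summed over `l ≤ k`. Here
`a = ⌈r (k + 2) / r (k + 1)⌉`, `d l = ⌈r (k + 2) / r l⌉`, and the digit `u 0` enters only at
`l = 1`. -/
lemma opt_coeff_sum (u D d : ℕ → ℕ) (c : ℕ → ℕ → ℕ) (a k : ℕ) (hk : 1 ≤ k)
    (hc : ∀ l, 1 ≤ l → l ≤ k → c l l = 1)
    (h1 : a * c (k + 1) 1 = u 0 + u 1 + (∑ j ∈ Finset.Icc 2 k, u j * c j 1) + d 1)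
    (h2 : ∀ l, 2 ≤ l → l ≤ k →
      a * c (k + 1) l = u l + (∑ j ∈ Finset.Icc (l + 1) k, u j * c j l) + d l) :
    a * (∑ l ∈ Finset.Icc 1 k, c (k + 1) l * D l) =
      (∑ j ∈ Finset.Icc 1 k, u j * (∑ l ∈ Finset.Icc 1 j, c j l * D l)) + u 0 * D 1 +
        ∑ l ∈ Finset.Icc 1 k, d l * D l := by
  have hu0 : u 0 * D 1 = ∑ l ∈ Finset.Icc 1 k, (if l = 1 then u 0 else 0) * D l := by
    simp [ite_mul, Finset.sum_ite_eq', hk]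
  rw [sum_triangle_swap, hu0, ← Finset.sum_add_distrib, ← Finset.sum_add_distrib, Finset.mul_sum]
  refine Finset.sum_congr rfl fun l hl => ?_
  rw [Finset.mem_Icc] at hl
  rw [← add_mul, ← add_mul, ← mul_assoc]
  congr 1
  rw [← Finset.add_sum_Ioc_eq_sum_Icc hl.2, hc l hl.1 hl.2, mul_one]
  rw [← Finset.Icc_add_one_left_eq_Ioc]
  rcases Nat.lt_or_ge 1 l with hl' | hl'
  · rw [h2 l hl' hl.2, if_neg (by omega)]
    ring
  · obtain rfl : l = 1 := by omega
    rw [h1, if_pos rfl, one_add_one_eq_two]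
    ring

/-- Sufficient conditions for optimality of the hierarchical distances. -/
theorem statement8 (h : ℕ) (hh : 1 ≤ h)
    (r ν a b n δ : ℕ → ℕ) (b' u' : ℕ → ℕ → ℕ)
    (hδ0 : δ 0 = 1)
    (hr1 : 1 < r 1)
    (hrmono : ∀ i, 1 ≤ i → i ≤ h → r i < r (i + 1))
    (hδ1 : 1 < δ 1)
    (hn1 : n 1 = r 1 + δ 1 - 1)
    (hν : ∀ i, 1 ≤ i → i ≤ h → (r (i + 1) + r i - 1) / r i ≤ ν i)
    (hnrec : ∀ i, 1 ≤ i → i ≤ h → n (i + 1) = ν i * n i)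
    (hab : ∀ i, 1 ≤ i → i ≤ h → r (i + 1) + b i = a i * r i ∧ b i < r i)
    (hbii : ∀ i, 1 ≤ i → i ≤ h → b' i i = b i)
    (hbrec : ∀ i, 1 ≤ i → i ≤ h → ∀ j, 2 ≤ j → j ≤ i →
      b' i j = u' i (j - 1) * r (j - 1) + b' i (j - 1) ∧ b' i (j - 1) < r (j - 1))
    (hb00 : b' 0 0 = 0)
    (hb0 : ∀ i, 1 ≤ i → i ≤ h →
      b' i 0 = (b' i 1 + b' (i - 1) 0) % r 1 ∧
      u' i 0 = (b' i 1 + b' (i - 1) 0) / r 1)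
    (hδrec : ∀ i, 1 ≤ i → i ≤ h →
      δ (i + 1) + b' (i - 1) 0 =
        (ν i - a i) * n i + δ i + (∑ j ∈ Finset.Icc 1 (i - 1), u' i j * n j) +
          u' i 0 * n 1 + b' i 0)
    (hopt1 : ∀ s, 2 ≤ s → s ≤ h →
      cld (r (s + 1)) (r s) * cld (r s) (r 1) =
        u' s 0 + u' s 1 + (∑ j ∈ Finset.Icc 2 (s - 1), u' s j * cld (r j) (r 1)) +
          cld (r (s + 1)) (r 1))
    (hopt2 : ∀ s, 2 ≤ s → s ≤ h → ∀ l, 2 ≤ l → l ≤ s - 1 →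
      cld (r (s + 1)) (r s) * cld (r s) (r l) =
        u' s l + (∑ j ∈ Finset.Icc (l + 1) (s - 1), u' s j * cld (r j) (r l)) +
          cld (r (s + 1)) (r l)) :
    ∀ i, 1 ≤ i → i ≤ h →
      δ (i + 1) + r (i + 1) +
          (∑ l ∈ Finset.Icc 1 i, cld (r (i + 1)) (r l) * (δ l - δ (l - 1))) =
        n (i + 1) + δ i := by
  have hpos : ∀ i, 1 ≤ i → i ≤ h + 1 → 0 < r i := by
    intro i hi
    induction i, hi using Nat.le_induction with
    | base => intro _; omega
    | succ k hk ih =>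
      intro hk'
      have := hrmono k hk (by omega)
      omega
  have ha : ∀ i, 1 ≤ i → i ≤ h → cld (r (i + 1)) (r i) = a i := fun i h1 h2 =>
    cld_eq_of_add_eq (hab i h1 h2).1 (hab i h1 h2).2
  have hν' : ∀ i, 1 ≤ i → i ≤ h → a i ≤ ν i := fun i h1 h2 => by
    rw [← ha i h1 h2]; exact hν i h1 h2
  -- Euclidean division defining `b' i 0` and `u' i 0`.
  have hdiv : ∀ i, 1 ≤ i → i ≤ h → u' i 0 * r 1 + b' i 0 = b' i 1 + b' (i - 1) 0 := by
    intro i h1 h2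
    rw [(hb0 i h1 h2).1, (hb0 i h1 h2).2, mul_comm]
    exact Nat.div_add_mod _ _
  -- The recursion for `δ` with `b' i 0` and `b' (i - 1) 0` eliminated.
  have hδ' : ∀ i, 1 ≤ i → i ≤ h → δ (i + 1) + u' i 0 * r 1 =
      (ν i - a i) * n i + δ i + (∑ j ∈ Finset.Icc 1 (i - 1), u' i j * n j) +
        u' i 0 * n 1 + b' i 1 := by
    intro i h1 h2
    have e1 := hδrec i h1 h2
    have e2 := hdiv i h1 h2
    omega
  have hmono : ∀ i, 1 ≤ i → i ≤ h → δ i ≤ δ (i + 1) := by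
    intro i h1 h2
    have e1 := hδ' i h1 h2
    have e2 : u' i 0 * r 1 ≤ u' i 0 * n 1 := Nat.mul_le_mul_left _ (by omega)
    omega
  obtain ⟨D, hD⟩ : ∃ D : ℕ → ℕ, ∀ l, D l = δ l - δ (l - 1) := ⟨_, fun _ => rfl⟩
  have hD1 : n 1 = r 1 + D 1 := by
    have := hD 1
    simp only [Nat.sub_self, hδ0] at this
    omega
  have key : ∀ m, 1 ≤ m → m ≤ h + 1 →
      n m = r m + ∑ l ∈ Finset.Icc 1 m, cld (r m) (r l) * D l := by
    intro m
    induction m using Nat.strong_induction_on with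
    | _ m ih =>
    intro hm1 hm2
    rcases Nat.lt_or_ge 1 m with hm | hm
    swap
    · obtain rfl : m = 1 := by omega
      simp [cld_self (hpos 1 le_rfl (by omega)), hD1]
    obtain ⟨k, rfl⟩ : ∃ k, m = k + 1 + 1 := ⟨m - 2, by omega⟩
    have hk1 : 1 ≤ k + 1 := by omega
    have hkh : k + 1 ≤ h := by omega
    have eδ := hδ' (k + 1) hk1 hkh
    have eD : δ (k + 1 + 1) = δ (k + 1) + D (k + 1 + 1) := by
      have := hmono (k + 1) hk1 hkh
      have := hD (k + 1 + 1)
      rw [Nat.add_sub_cancel] at this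
      omega
    simp only [Nat.add_sub_cancel] at eδ
    have en := ih (k + 1) (by omega) hk1 (by omega)
    rw [Finset.sum_Icc_succ_top (by omega), cld_self (hpos _ hk1 (by omega))] at en
    have eb : b (k + 1) = (∑ j ∈ Finset.Icc 1 k, u' (k + 1) j * r j) + b' (k + 1) 1 := by
      rw [← hbii _ hk1 hkh]
      refine mixed_radix_expansion (u' (k + 1)) r (b' (k + 1)) k fun j h1 h2 => ?_
      exact (hbrec _ hk1 hkh (j + 1) (by omega) (by omega)).1
    have er := (hab _ hk1 hkh).1
    have es : ∑ j ∈ Finset.Icc 1 k, u' (k + 1) j * n j =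
        (∑ j ∈ Finset.Icc 1 k, u' (k + 1) j * r j) +
          ∑ j ∈ Finset.Icc 1 k,
            u' (k + 1) j * (∑ l ∈ Finset.Icc 1 j, cld (r j) (r l) * D l) := by
      rw [← Finset.sum_add_distrib]
      refine Finset.sum_congr rfl fun j hj => ?_
      rw [Finset.mem_Icc] at hj
      rw [ih j (by omega) hj.1 (by omega), mul_add]
    have ec : a (k + 1) * (∑ l ∈ Finset.Icc 1 k, cld (r (k + 1)) (r l) * D l) =
        (∑ j ∈ Finset.Icc 1 k,
            u' (k + 1) j * (∑ l ∈ Finset.Icc 1 j, cld (r j) (r l) * D l)) +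
          u' (k + 1) 0 * D 1 + ∑ l ∈ Finset.Icc 1 k, cld (r (k + 1 + 1)) (r l) * D l := by
      rcases Nat.eq_zero_or_pos k with rfl | hk
      · -- At the first level `b' 1 1 = b 1 < r 1`, so the digit `u' 1 0` vanishes.
        have : u' 1 0 = 0 := by
          rw [(hb0 1 le_rfl hh).2, Nat.sub_self, hb00, hbii 1 le_rfl hh]
          exact Nat.div_eq_of_lt (hab 1 le_rfl hh).2
        simp [this]
      · refine opt_coeff_sum (u' (k + 1)) D (fun l => cld (r (k + 1 + 1)) (r l))
          (fun j l => cld (r j) (r l)) _ k hk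
          (fun l h1 h2 => cld_self (hpos l h1 (by omega))) ?_ ?_
        · rw [← ha _ hk1 hkh]
          exact hopt1 (k + 1) (by omega) hkh
        · intro l h1 h2
          rw [← ha _ hk1 hkh]
          exact hopt2 (k + 1) (by omega) hkh l h1 h2
    have hνa := hν' _ hk1 hkh
    rw [Finset.sum_Icc_succ_top (by omega), Finset.sum_Icc_succ_top (by omega),
      cld_self (hpos _ hm1 hm2), ha _ hk1 hkh, hnrec _ hk1 hkh]
    obtain ⟨t, ht⟩ := Nat.exists_eq_add_of_le hνa
    rw [ht, Nat.add_sub_cancel_left, es, hD1] at eδ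
    rw [ht]
    zify at eδ eD en eb er ec ⊢
    linear_combination a (k + 1) * en + ec - eδ + eD - er + eb
  intro i h1 h2
  have e := key (i + 1) (by omega) (by omega)
  rw [Finset.sum_Icc_succ_top (by omega), cld_self (hpos (i + 1) (by omega) (by omega)), hD,
    Nat.add_sub_cancel] at e
  simp only [hD] at e
  have := hmono i h1 h2
  omega
end

section
/- With the hierarchical parameter recursion below (in particular r_{i+1} > r_i for all i, so a_i ≥ 2), one has δ_{i+1} ≤ (ν_i - a_i + 1)n_i ≤ n_{i+1} - n_i for all 1 ≤ i ≤ h. Consequently, writing n = n_{h+1} and Z = Z_{h+1}, for every 1 ≤ i ≤ h and every t ∈ {n} ∪ (({1,…,n_i - 1} \ Z_i) + (n - n_i)) one has t ∉ Z. -/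
/-!
The bound on `δ (i + 1)` reduces to a superadditivity property of a greedy expansion.

Put `N i = ν 1 * ⋯ * ν (i - 1)`, so that `n i = n 1 * N i`, and let `X i x` (`wt r m (i - 1) x`
below) be the value obtained from the greedy expansion
`x = u (i - 1) * r (i - 1) + ⋯ + u 1 * r 1 + x'` by replacing each `r j` by `m j = r 1 * N j` and
keeping the remainder `x'`. Since `r (i + 1) ≤ a i * r i` and `a i * m i ≤ m (i + 1)`, carrying
never lowers the value, and hence `X i` is superadditive (`wt_superadd`).

Writing `c i = b' i 0`, the recursion gives `δ i = δ 1 + n 1 * K i + c (i - 1)` for some `K i`, and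
the recursion for `K` together with `r 1 * u' i 0 + c i = b' i 1 + c (i - 1)` reads
`r 1 * K (i + 1) + c i = r 1 * (ν i - a i) * N i + r 1 * K i + c (i - 1) + X i (b i)`.
The invariant is `X i x + r 1 * K i + c (i - 1) < r 1 * N i` for all `x < r i`. It propagates because
`x < r (i + 1)` means `x + b i ≤ a i * r i - 1`, so that
`X (i + 1) x + X i (b i) ≤ X (i + 1) (a i * r i - 1) = (a i - 1) * m i + X i (r i - 1)`.
At `x = b i` it yields `δ (i + 1) ≤ (ν i - a i + 1) * n i` (`delta_invariant`, `delta_step`).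

For the second part, `Z i` lies in `[1, n i - 1]`, and as `δ (i + 1) ≤ n (i + 1) - n i`, on the last
block of length `n i` the set `Z (i + 1)` is just a translate of `Z i`; so a gap `x` of `Z i`
persists as the gap `x + (n k - n i)` of `Z k` for every `k ≥ i`.
-/

/-- Weight of the greedy expansion of `x` in `r k, …, r 1`: the digit of `r j` counts `m j` and the
final remainder counts itself. The digit of `r k` is unbounded. -/
def wt (r m : ℕ → ℕ) : ℕ → ℕ → ℕ
  | 0, x => x
  | k + 1, x => x / r (k + 1) * m (k + 1) + wt r m k (x % r (k + 1))

lemma wt_mul_add (r m : ℕ → ℕ) (k p x : ℕ) (hr : 0 < r (k + 1)) :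
    wt r m (k + 1) (p * r (k + 1) + x) = p * m (k + 1) + wt r m (k + 1) x := by
  have h1 : (p * r (k + 1) + x) / r (k + 1) = p + x / r (k + 1) := by
    rw [add_comm, Nat.add_mul_div_right _ _ hr, add_comm]
  have h2 : (p * r (k + 1) + x) % r (k + 1) = x % r (k + 1) := by
    rw [add_comm, Nat.add_mul_mod_self_right]
  simp only [wt, h1, h2]
  ring

lemma wt_of_lt (r m : ℕ → ℕ) (k x : ℕ) (hx : x < r (k + 1)) :
    wt r m (k + 1) x = wt r m k x := by
  simp [wt, Nat.div_eq_of_lt hx, Nat.mod_eq_of_lt hx]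

/-- The second conjunct says that splitting off one `r (k + 1)` never lowers the weight; it is what
makes the induction for superadditivity work. -/
lemma wt_superadd (r m a : ℕ → ℕ) (h : ℕ) (hpos : ∀ i, 1 ≤ i → i ≤ h + 1 → 0 < r i)
    (hm1 : m 1 = r 1)
    (hr : ∀ i, 1 ≤ i → i ≤ h → r (i + 1) ≤ a i * r i)
    (hm : ∀ i, 1 ≤ i → i ≤ h → a i * m i ≤ m (i + 1)) (k : ℕ) (hk : k ≤ h) :
    (∀ x y, wt r m k x + wt r m k y ≤ wt r m k (x + y)) ∧
      (∀ z, wt r m k (z + r (k + 1)) ≤ m (k + 1) + wt r m k z) := by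
  induction k with
  | zero => exact ⟨fun x y => le_rfl, fun z => by simp [wt, hm1]; omega⟩
  | succ k ih =>
    obtain ⟨ih1, ih2⟩ := ih (by omega)
    have hp := hpos (k + 1) (by omega) (by omega)
    have key : ∀ q z, wt r m k (q * r (k + 1) + z) ≤ q * m (k + 1) + wt r m k z := by
      intro q
      induction q with
      | zero => intro z; simp
      | succ q ihq =>
        intro z
        have e : (q + 1) * r (k + 1) + z = (q * r (k + 1) + z) + r (k + 1) := by ring
        have := ih2 (q * r (k + 1) + z)
        have := ihq z
        rw [e, add_mul]
        omega
    have up : ∀ z, wt r m k z ≤ wt r m (k + 1) z := by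
      intro z
      have := key (z / r (k + 1)) (z % r (k + 1))
      rwa [Nat.div_add_mod'] at this
    have sup : ∀ x y, wt r m (k + 1) x + wt r m (k + 1) y ≤ wt r m (k + 1) (x + y) := by
      intro x y
      have e : x + y = (x / r (k + 1) + y / r (k + 1)) * r (k + 1) +
          (x % r (k + 1) + y % r (k + 1)) := by
        have := Nat.div_add_mod' x (r (k + 1))
        have := Nat.div_add_mod' y (r (k + 1))
        rw [add_mul]
        omega
      have h1 := up (x % r (k + 1) + y % r (k + 1))
      have h2 := ih1 (x % r (k + 1)) (y % r (k + 1))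
      rw [e, wt_mul_add r m k _ _ hp, add_mul]
      simp only [wt] at h1 ⊢
      omega
    refine ⟨sup, fun z => ?_⟩
    have hle := hr (k + 1) (by omega) hk
    obtain ⟨d, hd⟩ := Nat.exists_eq_add_of_le hle
    have h1 := sup (z + r (k + 1 + 1)) d
    have e : z + r (k + 1 + 1) + d = a (k + 1) * r (k + 1) + z := by omega
    rw [e, wt_mul_add r m k _ _ hp] at h1
    have := hm (k + 1) (by omega) hk
    omega

/-- The weight of a number whose successive remainders are `β k, …, β 1`. -/
lemma wt_digits (r N u β : ℕ → ℕ) (R k : ℕ)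
    (hβ : ∀ j, 2 ≤ j → j ≤ k + 1 →
      β j = u (j - 1) * r (j - 1) + β (j - 1) ∧ β (j - 1) < r (j - 1)) :
    wt r (fun j => R * N j) k (β (k + 1)) =
      R * (∑ j ∈ Finset.Icc 1 k, u j * N j) + β 1 := by
  induction k with
  | zero => simp [wt]
  | succ k ih =>
    obtain ⟨h1, h2⟩ := hβ (k + 1 + 1) (by omega) le_rfl
    simp only [Nat.add_sub_cancel] at h1 h2
    rw [h1, wt_mul_add _ _ _ _ _ (by omega), wt_of_lt _ _ _ _ h2,
      ih (fun j hj hjk => hβ j hj (by omega)), Finset.sum_Icc_succ_top (by omega)]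
    ring

/-- One step of the invariant, in absolute terms: `N`, `K`, `c` describe `n i` and `δ i`; `S` is the
digit sum, `β` the last remainder and `u₀`, `c'` its quotient and remainder modulo `R = r 1`. -/
lemma delta_step {R n₁ δ₁ N K c S β u₀ c' W ν a d d' ni : ℕ}
    (hn₁ : n₁ + 1 = R + δ₁) (hni : ni = n₁ * N) (hd : d = δ₁ + n₁ * K + c)
    (hW : W = R * S + β) (hinv : W + R * K + c < R * N)
    (hu : R * u₀ + c' = β + c) (hc' : c' < R)
    (hd' : d' + c = (ν - a) * ni + d + n₁ * S + u₀ * n₁ + c') :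
    d' = δ₁ + n₁ * ((ν - a) * N + K + S + u₀) + c' ∧ d' ≤ (ν - a + 1) * ni := by
  have h1 : d' = δ₁ + n₁ * ((ν - a) * N + K + S + u₀) + c' := by
    subst hni hd
    linarith [mul_comm n₁ u₀, show n₁ * ((ν - a) * N + K + S + u₀) =
      (ν - a) * (n₁ * N) + n₁ * K + n₁ * S + u₀ * n₁ by ring]
  have h2 : S + K + u₀ < N := by
    refine lt_of_mul_lt_mul_left (a := R) ?_ (Nat.zero_le _)
    nlinarith
  refine ⟨h1, ?_⟩
  have h3 : n₁ * (S + K + u₀ + 1) ≤ n₁ * N := Nat.mul_le_mul_left _ h2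
  have h4 : n₁ * ((ν - a) * N + K + S + u₀) + n₁ =
      (ν - a) * (n₁ * N) + n₁ * (S + K + u₀ + 1) := by ring
  rw [hni, add_mul, one_mul]
  omega

/-- The upper bound on `δ (i + 1)`, by induction on the invariant
`X i x + r 1 * K i + b' (i - 1) 0 < r 1 * N i` for `x < r i`. -/
lemma delta_invariant (h : ℕ) (r ν a b n δ : ℕ → ℕ) (b' u' : ℕ → ℕ → ℕ)
    (hr1 : 1 < r 1) (hδ1 : 1 < δ 1) (hn1 : n 1 = r 1 + δ 1 - 1)
    (hnrec : ∀ i, 1 ≤ i → i ≤ h → n (i + 1) = ν i * n i)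
    (hab : ∀ i, 1 ≤ i → i ≤ h → r (i + 1) + b i = a i * r i ∧ b i < r i)
    (hbii : ∀ i, 1 ≤ i → i ≤ h → b' i i = b i)
    (hbrec : ∀ i, 1 ≤ i → i ≤ h → ∀ j, 2 ≤ j → j ≤ i →
      b' i j = u' i (j - 1) * r (j - 1) + b' i (j - 1) ∧ b' i (j - 1) < r (j - 1))
    (hb00 : b' 0 0 = 0)
    (hb0 : ∀ i, 1 ≤ i → i ≤ h →
      b' i 0 = (b' i 1 + b' (i - 1) 0) % r 1 ∧
      u' i 0 = (b' i 1 + b' (i - 1) 0) / r 1)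
    (hδrec : ∀ i, 1 ≤ i → i ≤ h →
      δ (i + 1) + b' (i - 1) 0 =
        (ν i - a i) * n i + δ i + (∑ j ∈ Finset.Icc 1 (i - 1), u' i j * n j) +
          u' i 0 * n 1 + b' i 0)
    (hrpos : ∀ i, 1 ≤ i → i ≤ h + 1 → 0 < r i)
    (ha2 : ∀ i, 1 ≤ i → i ≤ h → 2 ≤ a i)
    (haν : ∀ i, 1 ≤ i → i ≤ h → a i ≤ ν i) :
    ∀ i, 1 ≤ i → i ≤ h → δ (i + 1) ≤ (ν i - a i + 1) * n i := by
  have hn1' : n 1 + 1 = r 1 + δ 1 := by omega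
  set N : ℕ → ℕ := fun i => ∏ j ∈ Finset.Ico 1 i, ν j with hN
  have hN1 : N 1 = 1 := by simp [hN]
  have hNs : ∀ i, 1 ≤ i → N (i + 1) = N i * ν i := fun i hi =>
    Finset.prod_Ico_succ_top hi _
  have hnN : ∀ i, 1 ≤ i → i ≤ h + 1 → n i = n 1 * N i := by
    intro i hi
    induction i, hi using Nat.le_induction with
    | base => intro _; simp [hN1]
    | succ i hi ih =>
      intro hih
      rw [hnrec i hi (by omega), hNs i hi, ih (by omega)]
      ring
  set X := wt r (fun j => r 1 * N j) with hX
  have hsup : ∀ k, k ≤ h → ∀ x y, X k x + X k y ≤ X k (x + y) := fun k hk =>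
    (wt_superadd r (fun j => r 1 * N j) a h hrpos (by simp [hN1])
      (fun i hi hih => by have := (hab i hi hih).1; omega)
      (fun i hi hih => by
        simp only [hNs i hi]
        calc a i * (r 1 * N i) ≤ ν i * (r 1 * N i) := Nat.mul_le_mul_right _ (haν i hi hih)
          _ = r 1 * (N i * ν i) := by ring) k hk).1
  have main : ∀ i, i ≤ h → (∃ K, δ (i + 1) = δ 1 + n 1 * K + b' i 0 ∧
      ∀ x, x < r (i + 1) → X i x + r 1 * K + b' i 0 < r 1 * N (i + 1)) ∧
      (1 ≤ i → δ (i + 1) ≤ (ν i - a i + 1) * n i) := by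
    intro i
    induction i with
    | zero =>
      intro _
      exact ⟨⟨0, by simp [hb00], fun x hx => by simpa [hb00, hN1, hX, wt] using hx⟩, by omega⟩
    | succ i ih =>
      intro hih
      obtain ⟨⟨K, hK, hinv⟩, -⟩ := ih (by omega)
      have hi : 1 ≤ i + 1 := by omega
      obtain ⟨hr, hb⟩ := hab (i + 1) hi hih
      obtain ⟨hc, hu⟩ := hb0 (i + 1) hi hih
      have hd := hδrec (i + 1) hi hih
      simp only [Nat.add_sub_cancel] at hc hu hd
      have hsum : ∑ j ∈ Finset.Icc 1 i, u' (i + 1) j * n j =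
          n 1 * ∑ j ∈ Finset.Icc 1 i, u' (i + 1) j * N j := by
        rw [Finset.mul_sum]
        refine Finset.sum_congr rfl fun j hj => ?_
        rw [Finset.mem_Icc] at hj
        rw [hnN j hj.1 (by omega)]
        ring
      rw [hsum] at hd
      have hW : X i (b (i + 1)) =
          r 1 * (∑ j ∈ Finset.Icc 1 i, u' (i + 1) j * N j) + b' (i + 1) 1 := by
        rw [← hbii (i + 1) hi hih]
        exact wt_digits r N (u' (i + 1)) (b' (i + 1)) (r 1) i (hbrec (i + 1) hi hih)
      have hdm : r 1 * u' (i + 1) 0 + b' (i + 1) 0 = b' (i + 1) 1 + b' i 0 := by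
        rw [hc, hu]
        exact Nat.div_add_mod _ _
      have hclt : b' (i + 1) 0 < r 1 := by
        rw [hc]
        exact Nat.mod_lt _ (by omega)
      obtain ⟨h1, h2⟩ := delta_step hn1' (hnN (i + 1) hi (by omega)) hK hW (hinv _ hb)
        hdm hclt hd
      refine ⟨⟨_, h1, fun x hx => ?_⟩, fun _ => h2⟩
      have hrp := hrpos (i + 1) hi (by omega)
      obtain ⟨α, hα⟩ : ∃ α, a (i + 1) = α + 1 :=
        ⟨a (i + 1) - 1, by have := ha2 (i + 1) hi hih; omega⟩
      obtain ⟨e, he⟩ := Nat.exists_eq_add_of_le (haν (i + 1) hi hih)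
      -- `x + b (i + 1) < a (i + 1) * r (i + 1)`, and `a (i + 1) * r (i + 1) - 1` has the greedy digit `α`.
      obtain ⟨y, hy⟩ : ∃ y, x + b (i + 1) + y = α * r (i + 1) + (r (i + 1) - 1) := by
        refine ⟨α * r (i + 1) + (r (i + 1) - 1) - (x + b (i + 1)), ?_⟩
        rw [hα, add_mul] at hr
        omega
      have h3 := hsup (i + 1) hih x (b (i + 1))
      have h4 := hsup (i + 1) hih (x + b (i + 1)) y
      have h5 : X (i + 1) (α * r (i + 1) + (r (i + 1) - 1)) =
          α * (r 1 * N (i + 1)) + X i (r (i + 1) - 1) := by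
        rw [hX, wt_mul_add _ _ _ _ _ hrp, wt_of_lt _ _ _ _ (by omega)]
      have h6 : X (i + 1) (b (i + 1)) = X i (b (i + 1)) := wt_of_lt _ _ _ _ hb
      have h7 := hinv (r (i + 1) - 1) (by omega)
      rw [hy, h5] at h4
      have h8 : ν (i + 1) - a (i + 1) = e := by omega
      rw [hNs (i + 1) hi, h8, he, hα]
      have h9 : X (i + 1) x + X i (b (i + 1)) ≤
          α * (r 1 * N (i + 1)) + X i (r (i + 1) - 1) := by omega
      rw [hW] at h9
      linarith [show r 1 * (e * N (i + 1) + K + ∑ j ∈ Finset.Icc 1 i, u' (i + 1) j * N j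
          + u' (i + 1) 0) = e * (r 1 * N (i + 1)) + r 1 * K +
          r 1 * (∑ j ∈ Finset.Icc 1 i, u' (i + 1) j * N j) + r 1 * u' (i + 1) 0 by ring,
        show r 1 * (N (i + 1) * (α + 1 + e)) =
          α * (r 1 * N (i + 1)) + r 1 * N (i + 1) + e * (r 1 * N (i + 1)) by ring]
  exact fun i hi hih => (main i hih).2 hi


/-- Bounds on `δ_{i+1}` and elements avoiding the defining set `Z`,
used for strong optimality. -/
theorem statement10 (h : ℕ) (hh : 1 ≤ h)
    (r ν a b n δ : ℕ → ℕ) (b' u' : ℕ → ℕ → ℕ) (Z : ℕ → Finset ℕ)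
    (hr1 : 1 < r 1)
    (hrmono : ∀ i, 1 ≤ i → i ≤ h → r i < r (i + 1))
    (hδ1 : 1 < δ 1)
    (hn1 : n 1 = r 1 + δ 1 - 1)
    (hν : ∀ i, 1 ≤ i → i ≤ h → (r (i + 1) + r i - 1) / r i ≤ ν i)
    (hnrec : ∀ i, 1 ≤ i → i ≤ h → n (i + 1) = ν i * n i)
    (hab : ∀ i, 1 ≤ i → i ≤ h → r (i + 1) + b i = a i * r i ∧ b i < r i)
    (hbii : ∀ i, 1 ≤ i → i ≤ h → b' i i = b i)
    (hbrec : ∀ i, 1 ≤ i → i ≤ h → ∀ j, 2 ≤ j → j ≤ i →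
      b' i j = u' i (j - 1) * r (j - 1) + b' i (j - 1) ∧ b' i (j - 1) < r (j - 1))
    (hb00 : b' 0 0 = 0)
    (hb0 : ∀ i, 1 ≤ i → i ≤ h →
      b' i 0 = (b' i 1 + b' (i - 1) 0) % r 1 ∧
      u' i 0 = (b' i 1 + b' (i - 1) 0) / r 1)
    (hδrec : ∀ i, 1 ≤ i → i ≤ h →
      δ (i + 1) + b' (i - 1) 0 =
        (ν i - a i) * n i + δ i + (∑ j ∈ Finset.Icc 1 (i - 1), u' i j * n j) +
          u' i 0 * n 1 + b' i 0)
    (hZ1 : Z 1 = Finset.Icc 1 (δ 1 - 1))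
    (hZrec : ∀ i, 1 ≤ i → i ≤ h →
      Z (i + 1) =
        ((Finset.range (ν i)).biUnion fun s => (Z i).image fun t => t + s * n i) ∪
          Finset.Icc 1 (δ (i + 1) - 1)) :
    (∀ i, 1 ≤ i → i ≤ h →
      δ (i + 1) ≤ (ν i - a i + 1) * n i ∧ (ν i - a i + 1) * n i ≤ n (i + 1) - n i) ∧
    (∀ i, 1 ≤ i → i ≤ h →
      ∀ t ∈ ({n (h + 1)} : Finset ℕ) ∪
          ((Finset.Icc 1 (n i - 1) \ Z i).image fun x => x + (n (h + 1) - n i)),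
        t ∉ Z (h + 1)) := by
  have hrpos : ∀ i, 1 ≤ i → i ≤ h + 1 → 0 < r i := by
    intro i hi
    induction i, hi using Nat.le_induction with
    | base => intro _; omega
    | succ i hi ih => intro hih; have := hrmono i hi (by omega); omega
  have ha2 : ∀ i, 1 ≤ i → i ≤ h → 2 ≤ a i := by
    intro i hi hih
    have h1 := hrmono i hi hih
    have h2 := (hab i hi hih).1
    by_contra hlt
    have : a i * r i ≤ 1 * r i := Nat.mul_le_mul_right _ (by omega)
    omega
  have haν : ∀ i, 1 ≤ i → i ≤ h → a i ≤ ν i := by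
    intro i hi hih
    refine le_trans ?_ (hν i hi hih)
    rw [Nat.le_div_iff_mul_le (hrpos i hi (by omega))]
    have := hab i hi hih
    omega
  have hnpos : ∀ i, 1 ≤ i → i ≤ h + 1 → 0 < n i := by
    intro i hi
    induction i, hi using Nat.le_induction with
    | base => intro _; omega
    | succ i hi ih =>
      intro hih
      rw [hnrec i hi (by omega)]
      have := ha2 i hi (by omega)
      have := haν i hi (by omega)
      exact Nat.mul_pos (by omega) (ih (by omega))
  have hδ := delta_invariant h r ν a b n δ b' u' hr1 hδ1 hn1 hnrec hab hbii hbrec hb00 hb0 hδrec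
    hrpos ha2 haν
  have hstep : ∀ i, 1 ≤ i → i ≤ h → (ν i - a i + 1) * n i + n i ≤ n (i + 1) := by
    intro i hi hih
    rw [hnrec i hi hih, ← Nat.succ_mul]
    have := ha2 i hi hih
    have := haν i hi hih
    exact Nat.mul_le_mul_right _ (by omega)
  have hZlt : ∀ i, 1 ≤ i → i ≤ h + 1 → ∀ t ∈ Z i, t < n i := by
    intro i hi
    induction i, hi using Nat.le_induction with
    | base =>
      intro _ t ht
      rw [hZ1, Finset.mem_Icc] at ht
      omega
    | succ i hi ih =>
      intro hih t ht
      rw [hZrec i hi (by omega), Finset.mem_union, Finset.mem_biUnion, Finset.mem_Icc] at ht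
      rcases ht with ⟨s, hs, ht⟩ | ht
      · obtain ⟨t', ht', rfl⟩ := Finset.mem_image.1 ht
        have h1 := ih (by omega) t' ht'
        have h2 : (s + 1) * n i ≤ ν i * n i :=
          Nat.mul_le_mul_right _ (Finset.mem_range.1 hs)
        rw [hnrec i hi (by omega)]
        rw [add_mul] at h2
        omega
      · have := hδ i hi (by omega)
        have := hstep i hi (by omega)
        omega
  refine ⟨fun i hi hih => ⟨hδ i hi hih, by have := hstep i hi hih; omega⟩, ?_⟩
  intro i hi hih t ht htZ
  rw [Finset.mem_union, Finset.mem_singleton] at ht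
  rcases ht with rfl | ht
  · exact lt_irrefl _ (hZlt (h + 1) (by omega) le_rfl _ htZ)
  obtain ⟨x, hx, rfl⟩ := Finset.mem_image.1 ht
  rw [Finset.mem_sdiff, Finset.mem_Icc] at hx
  obtain ⟨⟨hx1, hxn⟩, hxZ⟩ := hx
  have gap : ∀ k, i ≤ k → k ≤ h + 1 → n i ≤ n k ∧ x + (n k - n i) ∉ Z k := by
    intro k hk
    induction k, hk using Nat.le_induction with
    | base => intro _; simpa using hxZ
    | succ k hk ih =>
      intro hkh
      obtain ⟨hle, hnot⟩ := ih (by omega)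
      have h1 := hstep k (by omega) (by omega)
      have h2 := hδ k (by omega) (by omega)
      have h3 := hnrec k (by omega) (by omega)
      refine ⟨by omega, fun hmem => ?_⟩
      rw [hZrec k (by omega) (by omega), Finset.mem_union, Finset.mem_biUnion,
        Finset.mem_Icc] at hmem
      rcases hmem with ⟨s, hs, hmem⟩ | hmem
      · obtain ⟨t', ht', he⟩ := Finset.mem_image.1 hmem
        have h4 := hZlt k (by omega) (by omega) t' ht'
        have hsν := Finset.mem_range.1 hs
        -- The point lies in the last block of length `n k`, which forces `s = ν k - 1`.
        have h5 : ν k ≤ s + 1 := by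
          by_contra hlt
          have h6 : (s + 1 + 1) * n k ≤ ν k * n k := Nat.mul_le_mul_right _ (by omega)
          rw [add_mul, add_mul] at h6
          omega
        have h6 : ν k = s + 1 := by omega
        rw [h6, add_mul] at h3
        apply hnot
        have h7 : x + (n k - n i) = t' := by omega
        rwa [h7]
      · omega
  exact (gap (h + 1) (by omega) le_rfl).2 htZ
end

section
/- Let q be a prime power, and let G_0, G_1, …, G_M be k×n matrices over F_q with rank(G_0) = k. For j ≥ 0, set G_l = 0 for l > M, let G_j^c be the k(j+1) × n(j+1) block matrix whose (s,t) block, 0 ≤ s ≤ t ≤ j, equals G_{t-s} (and whose blocks below the diagonal are zero), and let C_{[0,j]} = {u·G_j^c : u ∈ F_q^{k(j+1)}} ⊆ F_q^{n(j+1)}. Define the j-th column distance d_j^c = min{ wt(u·G_j^c) : u = (u_0,…,u_j) ∈ F_q^{k(j+1)}, u_0 ≠ 0 }. If the block code C_{[0,j]} has (r,δ) locality (in particular, if the underlying convolutional code has (r,δ) column locality or (r,δ) row locality), then d_j^c ≤ (n-k)(j+1) + δ - ⌈k/r⌉(δ-1). -/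
/-!
For a code `C` let `C(S)` be the codewords vanishing on the coordinate set `S`, so that
`dim C - dim C(S)` is the rank of `S`.

If `C(S) ≠ 0`, some codeword of `C(S)` is nonzero at a coordinate `i`; imposing zeros on the
repair set `J` of `i` costs, by the Singleton bound applied to `C(S)` on `J \ S`, at most
`|J \ S| - (δ - 1)` dimensions, which is at most `r`
(`LRC.finrank_shorten_union_repair`). Doing this `m = ⌈k/r⌉ - 1` times produces `S` of rank at
most `r m ≤ k - 1` with `|S| ≥ rank S + m (δ - 1)` (`LRC.exists_redundant_set`).

The codewords with `u₀ = 0` form a subspace `D` of codimension `k`, so `C(S) ⊄ D`. A codeword of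
minimal weight in `C(S) \ D` is determined up to scalars by its zero set
(`LRC.shorten_zeros_le_span`), which therefore has at least `dim C - 1 + m (δ - 1)` elements.
This bounds the weight of a codeword with `u₀ ≠ 0`.
-/

open Polynomial Finset

attribute [local instance 10] Classical.propDecidable

noncomputable section

namespace LRC

variable (F : Type) [Field F]

/-- The generator matrix `G_j^c` of the truncated convolutional code: block `(s,t)`
equals `G_{t-s}` for `s ≤ t` and `0` otherwise. -/
def truncGen (k n : ℕ) (G : ℕ → Matrix (Fin k) (Fin n) F) (j : ℕ) :
    Matrix (Fin (j + 1) × Fin k) (Fin (j + 1) × Fin n) F :=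
  Matrix.of fun p q =>
    if (p.1 : ℕ) ≤ (q.1 : ℕ) then G ((q.1 : ℕ) - (p.1 : ℕ)) p.2 q.2 else 0

/-- The truncated convolutional code `C_{[0,j]}`, as a block code of length `n(j+1)`. -/
def truncCode (k n : ℕ) (G : ℕ → Matrix (Fin k) (Fin n) F) (j : ℕ) :
    Submodule F ((Fin (j + 1) × Fin n) → F) :=
  LinearMap.range (truncGen F k n G j).vecMulLinear

/-- The `j`-th column distance: the least weight of a truncated codeword whose
initial block `u_0` of the input is nonzero. -/
def colDist (k n : ℕ) (G : ℕ → Matrix (Fin k) (Fin n) F) (j : ℕ) : ℕ :=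
  sInf {w | ∃ u : (Fin (j + 1) × Fin k) → F, (fun i => u (0, i)) ≠ 0 ∧
    w = hammingNorm (Matrix.vecMul u (truncGen F k n G j))}

end LRC

namespace LRC

variable {F : Type} [Field F] {ι : Type} [Fintype ι]

/-- The subcode of codewords of `C` vanishing on `S` (not punctured: the coordinates in `S` are
kept). -/
def shorten (C : Submodule F (ι → F)) (S : Finset ι) : Submodule F (ι → F) :=
  C ⊓ Submodule.pi (S : Set ι) (fun _ => ⊥)

theorem mem_shorten {C : Submodule F (ι → F)} {S : Finset ι} {c : ι → F} :
    c ∈ shorten C S ↔ c ∈ C ∧ ∀ i ∈ S, c i = 0 := by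
  simp only [shorten, Submodule.mem_inf, Submodule.mem_pi, Submodule.mem_bot, Finset.mem_coe]

theorem shorten_shorten (C : Submodule F (ι → F)) (S T : Finset ι) :
    shorten (shorten C S) T = shorten C (S ∪ T) := by
  ext c
  simp only [mem_shorten, Finset.mem_union]
  constructor
  · rintro ⟨⟨h, h1⟩, h2⟩
    exact ⟨h, fun i hi => hi.elim (h1 i) (h2 i)⟩
  · rintro ⟨h, h1⟩
    exact ⟨⟨h, fun i hi => h1 i (Or.inl hi)⟩, fun i hi => h1 i (Or.inr hi)⟩

theorem finrank_le_finrank_shorten_add_card (V : Submodule F (ι → F)) (T : Finset ι) :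
    Module.finrank F V ≤ Module.finrank F (shorten V T) + T.card := by
  let f : V →ₗ[F] (↥T → F) :=
    (LinearMap.funLeft F F (Subtype.val : ↥T → ι)).comp V.subtype
  have h1 := f.finrank_range_add_finrank_ker
  have h2 : Module.finrank F (LinearMap.range f) ≤ T.card := by
    simpa using Submodule.finrank_le (LinearMap.range f)
  have h3 : (LinearMap.ker f).map V.subtype ≤ shorten V T := by
    rintro _ ⟨v, hv, rfl⟩
    refine mem_shorten.2 ⟨v.2, fun i hi => ?_⟩
    exact congrFun (LinearMap.mem_ker.1 hv) ⟨i, hi⟩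
  have h4 := Submodule.finrank_mono h3
  rw [Submodule.finrank_map_subtype_eq] at h4
  omega

/-- A codeword with fewer than `δ` possibly nonzero coordinates on a repair set `J` vanishes
on `J`. -/
theorem eq_zero_on_repair {C : Submodule F (ι → F)} {J R : Finset ι} {δ : ℕ}
    (hJ : minDistGE F (punctured F C J : Set (↥J → F)) δ) {c : ι → F} (hc : c ∈ C)
    (hR : ∀ i ∈ J, i ∉ R → c i = 0) (hcard : R.card < δ) : ∀ i ∈ J, c i = 0 := by
  by_contra! hne
  obtain ⟨i, hi, hci⟩ := hne
  have h := hJ (LinearMap.funLeft F F (Subtype.val : ↥J → ι) c)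
    (Submodule.mem_map_of_mem hc) (fun h0 => hci (congrFun h0 ⟨i, hi⟩))
  refine absurd h (not_le.2 (lt_of_le_of_lt ?_ hcard))
  refine Finset.card_le_card_of_injOn Subtype.val ?_ Subtype.val_injective.injOn
  intro x hx
  by_contra hxR
  exact (Finset.mem_filter.1 (Finset.mem_coe.1 hx)).2 (hR x x.2 hxR)

/-- The Singleton bound on `J \ S` for the codewords vanishing on `S`, provided that one of them
does not vanish on `J`. -/
theorem finrank_shorten_union_repair {C : Submodule F (ι → F)} {S J : Finset ι} {δ : ℕ}
    (hδ : 2 ≤ δ) (hJ : minDistGE F (punctured F C J : Set (↥J → F)) δ)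
    {v : ι → F} (hv : v ∈ shorten C S) {i : ι} (hi : i ∈ J) (hvi : v i ≠ 0) :
    Module.finrank F (shorten C S) + (δ - 1) ≤
        Module.finrank F (shorten C (S ∪ J)) + (J \ S).card ∧ δ ≤ (J \ S).card := by
  have hδJ : δ ≤ (J \ S).card := by
    by_contra! hlt
    refine hvi (eq_zero_on_repair hJ (mem_shorten.1 hv).1 (fun x hx hxR => ?_) hlt i hi)
    refine (mem_shorten.1 hv).2 x ?_
    by_contra hxS
    exact hxR (Finset.mem_sdiff.2 ⟨hx, hxS⟩)
  refine ⟨?_, hδJ⟩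
  obtain ⟨T, hTJ, hT⟩ := Finset.exists_subset_card_eq
    (show (J \ S).card - (δ - 1) ≤ (J \ S).card from Nat.sub_le _ _)
  have h1 := finrank_le_finrank_shorten_add_card (shorten C S) T
  rw [shorten_shorten] at h1
  have h2 : shorten C (S ∪ T) ≤ shorten C (S ∪ J) := by
    intro c hc
    obtain ⟨hcC, hc0⟩ := mem_shorten.1 hc
    have hz := eq_zero_on_repair (R := (J \ S) \ T) hJ hcC (fun x hx hxR => hc0 x (by
      simp only [Finset.mem_sdiff, Finset.mem_union] at hxR ⊢
      tauto)) (by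
        rw [Finset.card_sdiff_of_subset hTJ]
        omega)
    refine mem_shorten.2 ⟨hcC, fun x hx => ?_⟩
    rcases Finset.mem_union.1 hx with hx | hx
    · exact hc0 x (Finset.mem_union_left _ hx)
    · exact hz x hx
  have h3 := Submodule.finrank_mono h2
  omega

/-- The first inequality says that `S` has rank at most `r * m`, the second that the size of `S`
exceeds its rank by at least `m * (δ - 1)`. -/
theorem exists_redundant_set {C : Submodule F (ι → F)} {r δ : ℕ} (hr : 0 < r) (hδ : 2 ≤ δ)
    (hloc : HasLocalityRD F C r δ) (m : ℕ) (hm : r * m < Module.finrank F C + r) :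
    ∃ S : Finset ι, Module.finrank F C ≤ Module.finrank F (shorten C S) + r * m ∧
      Module.finrank F C + m * (δ - 1) ≤ Module.finrank F (shorten C S) + S.card := by
  induction m with
  | zero =>
    have h := finrank_le_finrank_shorten_add_card C ∅
    exact ⟨∅, by simpa using h, by simpa using h⟩
  | succ m ih =>
    rw [Nat.mul_succ] at hm
    obtain ⟨S, h1, h2⟩ := ih (by omega)
    have hne : shorten C S ≠ ⊥ := by
      intro h0
      rw [h0, finrank_bot] at h1
      omega
    obtain ⟨v, hv, hv0⟩ := Submodule.exists_mem_ne_zero_of_ne_bot hne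
    obtain ⟨i, hi⟩ := Function.ne_iff.1 hv0
    obtain ⟨J, hiJ, hJc, hJ⟩ := hloc i
    obtain ⟨h3, h4⟩ := finrank_shorten_union_repair hδ hJ hv hiJ hi
    have h5 : (S ∪ J).card = S.card + (J \ S).card := by
      rw [← Finset.union_sdiff_self_eq_union,
        Finset.card_union_of_disjoint Finset.disjoint_sdiff]
    have h6 : (J \ S).card ≤ J.card := Finset.card_le_card Finset.sdiff_subset
    refine ⟨S ∪ J, ?_, ?_⟩
    · rw [Nat.mul_succ]
      omega
    · rw [Nat.succ_mul, h5]
      omega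

/-- Cancelling a coordinate `x` of `c` by a vector `v` supported inside the support of `c` lowers
the weight. -/
theorem hammingNorm_sub_smul_lt {c v : ι → F} (hs : ∀ i, c i = 0 → v i = 0) {x : ι}
    (hx : v x ≠ 0) : hammingNorm (c - (c x / v x) • v) < hammingNorm c := by
  refine Finset.card_lt_card (Finset.ssubset_iff_of_subset ?_ |>.2 ⟨x, ?_, ?_⟩)
  · intro i hi
    simp only [Finset.mem_filter, Finset.mem_univ, true_and, Pi.sub_apply, Pi.smul_apply,
      smul_eq_mul] at hi ⊢
    intro h0
    exact hi (by rw [h0, hs i h0]; simp)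
  · simpa using fun h0 => hx (hs x h0)
  · simp [hx]

/-- If `c` has minimal weight among the elements of `V` outside `D`, then the elements of `V`
supported inside the support of `c` are its multiples. -/
theorem shorten_zeros_le_span {V D : Submodule F (ι → F)} {c : ι → F} (hcV : c ∈ V)
    (hcD : c ∉ D) (hmin : ∀ w ∈ V, w ∉ D → hammingNorm c ≤ hammingNorm w) :
    shorten V (Finset.univ.filter fun i => c i = 0) ≤ Submodule.span F {c} := by
  have key : ∀ v ∈ V, (∀ i, c i = 0 → v i = 0) → v ∈ D → v = 0 := by
    intro v hv hs hvD
    by_contra hv0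
    obtain ⟨x, hx⟩ := Function.ne_iff.1 hv0
    refine absurd (hmin _ (V.sub_mem hcV (V.smul_mem (c x / v x) hv)) fun hD => hcD ?_)
      (not_le.2 (hammingNorm_sub_smul_lt hs hx))
    simpa using D.add_mem hD (D.smul_mem (c x / v x) hvD)
  intro v hv
  obtain ⟨hvV, hs⟩ := mem_shorten.1 hv
  replace hs : ∀ i, c i = 0 → v i = 0 := fun i hi => hs i (by simpa using hi)
  by_cases hv0 : v = 0
  · rw [hv0]
    exact zero_mem _
  obtain ⟨x, hx⟩ := Function.ne_iff.1 hv0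
  have hcx : c x ≠ 0 := fun h0 => hx (hs x h0)
  have hwV := V.sub_mem hcV (V.smul_mem (c x / v x) hvV)
  have hwD : c - (c x / v x) • v ∈ D := by
    by_contra hD
    exact absurd (hmin _ hwV hD) (not_le.2 (hammingNorm_sub_smul_lt hs hx))
  have hw := key _ hwV (fun i hi => by simp [hi, hs i hi]) hwD
  refine Submodule.mem_span_singleton.2 ⟨v x / c x, ?_⟩
  rw [sub_eq_zero] at hw
  nth_rewrite 2 [hw]
  rw [smul_smul, div_mul_div_cancel₀ hcx, div_self hx, one_smul]

/-- A Singleton-type bound for the least weight of `C \ D`. -/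
theorem exists_weight_le {C D : Submodule F (ι → F)} {r δ k m : ℕ} (hr : 0 < r) (hδ : 2 ≤ δ)
    (hloc : HasLocalityRD F C r δ)
    (hD : Module.finrank F D + k ≤ Module.finrank F C) (hm : r * m < k) :
    ∃ c ∈ C, c ∉ D ∧
      hammingNorm c + Module.finrank F C + m * (δ - 1) ≤ Fintype.card ι + 1 := by
  obtain ⟨S, h1, h2⟩ := exists_redundant_set hr hδ hloc m (by omega)
  have hex : ∃ w, ∃ c ∈ shorten C S, c ∉ D ∧ hammingNorm c = w := by
    by_contra! hno
    have hle : shorten C S ≤ D := fun c hc => by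
      by_contra hcD
      exact hno _ c hc hcD rfl
    have := Submodule.finrank_mono hle
    omega
  obtain ⟨c, hc, hcD, hcw⟩ := Nat.find_spec hex
  have hspan := shorten_zeros_le_span hc hcD fun w hw hwD =>
    hcw ▸ Nat.find_min' hex ⟨w, hw, hwD, rfl⟩
  set Z : Finset ι := Finset.univ.filter fun i => c i = 0 with hZ
  refine ⟨c, (mem_shorten.1 hc).1, hcD, ?_⟩
  have h3 : Module.finrank F (shorten (shorten C S) Z) ≤ 1 :=
    (Submodule.finrank_mono hspan).trans ((finrank_span_le_card _).trans (by simp))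
  have hSZ : S ⊆ Z := fun i hi => by simpa [hZ] using (mem_shorten.1 hc).2 i hi
  have h4 := finrank_le_finrank_shorten_add_card (shorten C S) (Z \ S)
  have h5 : shorten (shorten C S) (Z \ S) = shorten (shorten C S) Z := by
    rw [shorten_shorten, shorten_shorten, Finset.union_sdiff_self_eq_union]
  rw [h5, Finset.card_sdiff_of_subset hSZ] at h4
  have h6 := Finset.card_le_card hSZ
  have h7 : Z.card + hammingNorm c = Fintype.card ι := by
    rw [hZ, hammingNorm]
    exact Finset.card_filter_add_card_filter_not (s := Finset.univ) (fun i => c i = 0)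
  omega

/-- The truncated generator matrix is block upper triangular with the full-rank block `G 0` on
the diagonal. -/
theorem truncGen_injective {k n : ℕ} (G : ℕ → Matrix (Fin k) (Fin n) F)
    (hG0 : (G 0).rank = k) (j : ℕ) :
    Function.Injective (truncGen F k n G j).vecMulLinear := by
  have hG : Function.Injective (G 0).vecMul := by
    rw [Matrix.vecMul_injective_iff, linearIndependent_iff_card_eq_finrank_span, Set.finrank,
      ← Matrix.rank_eq_finrank_span_row, hG0, Fintype.card_fin]
  refine (injective_iff_map_eq_zero _).2 fun u hu => ?_
  have key : ∀ t : ℕ, ∀ ht : t < j + 1, ∀ i, u (⟨t, ht⟩, i) = 0 := by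
    intro t
    induction t using Nat.strong_induction_on with
    | _ t ih =>
      intro ht i
      have h0 : (G 0).vecMul (fun i => u (⟨t, ht⟩, i)) = (G 0).vecMul 0 := by
        rw [Matrix.zero_vecMul]
        funext l
        have h1 := congrFun hu (⟨t, ht⟩, l)
        rw [Matrix.vecMulLinear_apply, Matrix.vecMul, dotProduct, Fintype.sum_prod_type,
          Finset.sum_eq_single ⟨t, ht⟩] at h1
        · simpa [truncGen, Matrix.vecMul, dotProduct] using h1
        · intro s _ hs
          refine Finset.sum_eq_zero fun i _ => ?_
          have hst : (s : ℕ) ≠ t := fun h => hs (Fin.ext h)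
          rcases lt_or_gt_of_ne hst with hlt | hgt
          · rw [ih s hlt s.2 i, zero_mul]
          · have hlt : ¬ (s : ℕ) ≤ t := not_le.2 hgt
            simp only [truncGen, Matrix.of_apply, if_neg hlt, mul_zero]
        · simp
      exact congrFun (hG h0) i
  funext ⟨s, i⟩
  exact key s s.2 i

end LRC

/-- Upper bound on the column distance of convolutional codes with
locality. -/
theorem statement14 (q n k r δ M : ℕ) (F : Type) [Field F] [Fintype F]
    (hq : ∃ p s : ℕ, p.Prime ∧ 0 < s ∧ q = p ^ s)
    (hcard : Fintype.card F = q)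
    (hk : 0 < k) (hn : 0 < n) (hkn : k ≤ n) (hr : 0 < r) (hδ : 2 ≤ δ)
    (G : ℕ → Matrix (Fin k) (Fin n) F)
    (hGM : ∀ l, M < l → G l = 0)
    (hG0 : (G 0).rank = k)
    (j : ℕ)
    (hloc : LRC.HasLocalityRD F (LRC.truncCode F k n G j) r δ) :
    (LRC.colDist F k n G j : ℤ) ≤
      ((n : ℤ) - k) * (j + 1) + δ - (((k + r - 1) / r : ℕ) : ℤ) * ((δ : ℤ) - 1) := by
  let A := (LRC.truncGen F k n G j).vecMulLinear
  have hA : Function.Injective A := LRC.truncGen_injective G hG0 j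
  let P : ((Fin (j + 1) × Fin k) → F) →ₗ[F] (Fin k → F) :=
    LinearMap.funLeft F F (fun i => ((0 : Fin (j + 1)), i))
  have hP : Function.Surjective P :=
    LinearMap.funLeft_surjective_of_injective F F _ (fun a b h => (Prod.mk.inj h).2)
  have hC : Module.finrank F (LRC.truncCode F k n G j) = (j + 1) * k := by
    rw [LRC.truncCode, LinearMap.finrank_range_of_inj hA]
    simp
  have hD : Module.finrank F ((LinearMap.ker P).map A) + k = (j + 1) * k := by
    rw [LinearEquiv.finrank_eq (Submodule.equivMapOfInjective A hA _).symm]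
    have h1 := P.finrank_range_add_finrank_ker
    rw [LinearMap.range_eq_top.2 hP, finrank_top] at h1
    simp only [Module.finrank_fintype_fun_eq_card, Fintype.card_prod, Fintype.card_fin] at h1
    omega
  -- `m + 1 = ⌈k / r⌉`
  obtain ⟨m, hm⟩ : ∃ m, (k + r - 1) / r = m + 1 :=
    Nat.exists_eq_succ_of_ne_zero (Nat.div_pos (by omega) hr).ne'
  have hmk : r * m < k := by
    have h1 := Nat.mul_div_le (k + r - 1) r
    rw [hm, Nat.mul_succ] at h1
    omega
  obtain ⟨c, hc, hcD, hw⟩ := LRC.exists_weight_le hr hδ hloc (hD.trans hC.symm).le hmk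
  obtain ⟨u, rfl⟩ := hc
  have hle : LRC.colDist F k n G j ≤ hammingNorm (A u) :=
    Nat.sInf_le ⟨u, fun h0 => hcD (Submodule.mem_map_of_mem (LinearMap.mem_ker.2 h0)), rfl⟩
  rw [hC] at hw
  simp only [Fintype.card_prod, Fintype.card_fin] at hw
  have hw' := (Nat.add_le_add_right (Nat.add_le_add_right hle _) _).trans hw
  rw [hm]
  obtain ⟨e, rfl⟩ : ∃ e, δ = e + 1 := ⟨δ - 1, by omega⟩
  rw [Nat.add_sub_cancel] at hw'
  zify at hw'
  push_cast
  linarith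
end
end

section
/- Let q be a prime power, and let G_0, G_1, …, G_M be k×n matrices over F_q with rank(G_0) = k. For i ≥ 0, set G_l = 0 for l > M, let G_i^c be the k(i+1) × n(i+1) block matrix whose (s,t) block, 0 ≤ s ≤ t ≤ i, equals G_{t-s}, let C_{[0,i]} = {u·G_i^c : u ∈ F_q^{k(i+1)}}, and let d_i^c = min{ wt(u·G_i^c) : u = (u_0,…,u_i), u_0 ≠ 0 } be the i-th column distance. Suppose C_{[0,i]} has (r,δ) locality for every 0 ≤ i ≤ j, and suppose d_j^c = (n-k)(j+1) + δ - ⌈k/r⌉(δ-1). Then for every 0 ≤ i ≤ j one has d_i^c = (n-k)(i+1) + δ - ⌈k/r⌉(δ-1). -/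
/-!
The argument combines two facts.

* `LRC.colDist_succ_le`: column distances grow by at most `n - k` per step. An optimal input for
  step `i` can be extended by a block `v` for which the new output block `w + v G₀` vanishes on an
  information set of `G₀`, hence has weight at most `n - k` (`LRC.exists_coset_light`).
* `LRC.singleton_locality`: the Singleton bound for `(r, δ)` locality. Applied to `C_{[0,0]}`, the
  block code generated by `G₀`, it bounds `d_0` by `n - k + δ - ⌈k/r⌉ (δ - 1)`.

Adding up the increments between `0` and `i` gives `d_i ≤ d_0 + (n - k) i`, which is at most the
claimed value, and adding them up between `i` and `j` gives `d_j ≤ d_i + (n - k) (j - i)`, so that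
optimality of `d_j` forces `d_i` to be at least the claimed value.

The Singleton bound is proved by following the shortened codes `sh C S`, the codewords vanishing on
`S`. Adjoining `t` coordinates to `S` costs at most `t` dimensions. Adjoining a whole repair set
`J` costs `δ - 1` fewer, because a codeword vanishing on all but `δ - 1` coordinates of `J` vanishes
on `J`. With `m = ⌈k/r⌉ - 1` repair sets this leaves a nonzero shortened code whose dimension plus
`|S|` is at least `k + m (δ - 1)`, and single coordinates are then adjoined until the dimension
is one.
-/

open Polynomial Finset

attribute [local instance 10] Classical.propDecidable

noncomputable section

namespace LRC

/-! ### Shortened codes and the Singleton bound for locality -/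

section Block

variable {F : Type} [Field F] {ι : Type} [Fintype ι]

/-- The vectors that vanish on the coordinate set `S`. -/
def van (F : Type) [Field F] {ι : Type} [Fintype ι] (S : Finset ι) : Submodule F (ι → F) :=
  LinearMap.ker (LinearMap.funLeft F F (Subtype.val : ↥S → ι))

/-- The codewords of `C` that vanish on `S`: the shortened code, with the coordinates in `S`
kept. -/
def sh (C : Submodule F (ι → F)) (S : Finset ι) : Submodule F (ι → F) := C ⊓ van F S

lemma mem_van {S : Finset ι} {c : ι → F} : c ∈ van F S ↔ ∀ i ∈ S, c i = 0 := by
  simp [van, LinearMap.mem_ker, funext_iff, LinearMap.funLeft_apply]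

lemma mem_sh {C : Submodule F (ι → F)} {S : Finset ι} {c : ι → F} :
    c ∈ sh C S ↔ c ∈ C ∧ ∀ i ∈ S, c i = 0 := by
  simp [sh, mem_van]

lemma sh_empty (C : Submodule F (ι → F)) : sh C ∅ = C := by
  ext c; simp [mem_sh]

lemma finrank_sh_union (C : Submodule F (ι → F)) (S T : Finset ι) :
    Module.finrank F (sh C S) ≤ Module.finrank F (sh C (S ∪ T)) + T.card := by
  have h1 : sh C (S ∪ T) = sh C S ⊓ van F T := by
    ext c
    simp only [mem_sh, Submodule.mem_inf, mem_van, Finset.mem_union]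
    constructor
    · rintro ⟨h, h'⟩
      exact ⟨⟨h, fun i hi => h' i (Or.inl hi)⟩, fun i hi => h' i (Or.inr hi)⟩
    · rintro ⟨⟨h, h'⟩, h''⟩
      exact ⟨h, fun i hi => hi.elim (h' i) (h'' i)⟩
  have h2 := Submodule.finrank_sup_add_finrank_inf_eq (sh C S) (van F T)
  have h3 := LinearMap.finrank_range_add_finrank_ker
    (LinearMap.funLeft F F (Subtype.val : ↥T → ι))
  have h4 := Submodule.finrank_le
    (LinearMap.range (LinearMap.funLeft F F (Subtype.val : ↥T → ι)))
  have h5 := Submodule.finrank_le (sh C S ⊔ van F T)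
  rw [h1]
  simp only [Module.finrank_fintype_fun_eq_card, Fintype.card_coe] at h3 h4 h5
  change _ + Module.finrank F (van F T) = _ at h3
  omega

lemma hammingNorm_add_card_le {S : Finset ι} {c : ι → F} (h : ∀ i ∈ S, c i = 0) :
    hammingNorm c + S.card ≤ Fintype.card ι := by
  unfold hammingNorm
  rw [← Finset.card_union_of_disjoint]
  · exact Finset.card_le_univ _
  · rw [Finset.disjoint_left]
    intro i hi hS
    simp only [Finset.mem_filter] at hi
    exact hi.2 (h i hS)

lemma exists_ne_of_finrank_pos {C : Submodule F (ι → F)} {S : Finset ι}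
    (h : 0 < Module.finrank F (sh C S)) : ∃ c ∈ sh C S, ∃ i, i ∉ S ∧ c i ≠ 0 := by
  have hne : sh C S ≠ ⊥ := by
    intro h0
    rw [h0, finrank_bot] at h
    exact lt_irrefl _ h
  obtain ⟨c, hc, hc0⟩ := Submodule.exists_mem_ne_zero_of_ne_bot hne
  obtain ⟨i, hi⟩ := Function.ne_iff.mp hc0
  exact ⟨c, hc, i, fun hS => hi ((mem_sh.mp hc).2 i hS), hi⟩

lemma finrank_sh_insert (C : Submodule F (ι → F)) (S : Finset ι) (i : ι) :
    Module.finrank F (sh C S) ≤ Module.finrank F (sh C (insert i S)) + 1 := by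
  have := finrank_sh_union C S {i}
  rwa [Finset.card_singleton, Finset.union_comm, ← Finset.insert_eq] at this

/-- Adjoining coordinates to `S` one at a time until the shortened code has dimension one yields
a nonzero codeword of small weight. -/
lemma exists_light_s15 (C : Submodule F (ι → F)) (d : ℕ) : ∀ S : Finset ι,
    d + 1 ≤ Module.finrank F (sh C S) →
    ∃ c ∈ C, c ≠ 0 ∧ hammingNorm c + S.card + d ≤ Fintype.card ι := by
  induction d with
  | zero =>
    intro S h
    obtain ⟨c, hc, i, -, hi⟩ := exists_ne_of_finrank_pos h
    exact ⟨c, (mem_sh.mp hc).1, fun h0 => hi (by simp [h0]),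
      hammingNorm_add_card_le (mem_sh.mp hc).2⟩
  | succ d ih =>
    intro S h
    obtain ⟨c, hc, i, hiS, hi⟩ := exists_ne_of_finrank_pos (Nat.lt_of_lt_of_le (by omega) h)
    have := finrank_sh_insert C S i
    obtain ⟨c', hc', h0, hw⟩ := ih (insert i S) (by omega)
    rw [Finset.card_insert_of_notMem hiS] at hw
    exact ⟨c', hc', h0, by omega⟩

/-- A coset of a `d`-dimensional code contains a word of weight at most `card ι - d`. The set `S`
of coordinates already cleared is carried along for the induction. -/
lemma exists_coset_light (C : Submodule F (ι → F)) (d : ℕ) : ∀ (S : Finset ι) (w : ι → F),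
    d ≤ Module.finrank F (sh C S) → (∀ i ∈ S, w i = 0) →
    ∃ c ∈ C, hammingNorm (w + c) + S.card + d ≤ Fintype.card ι := by
  induction d with
  | zero =>
    intro S w _ hw
    exact ⟨0, C.zero_mem, by simpa using hammingNorm_add_card_le hw⟩
  | succ d ih =>
    intro S w h hw
    obtain ⟨c, hc, i, hiS, hi⟩ := exists_ne_of_finrank_pos (Nat.lt_of_lt_of_le (by omega) h)
    have := finrank_sh_insert C S i
    obtain ⟨hcC, hcS⟩ := mem_sh.mp hc
    obtain ⟨c', hc', hw'⟩ := ih (insert i S) (w + (-(w i / c i)) • c) (by omega) (by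
      intro l hl
      rcases Finset.mem_insert.mp hl with rfl | hl
      · simp only [Pi.add_apply, Pi.smul_apply, smul_eq_mul]
        field_simp
        ring
      · simp [hw l hl, hcS l hl])
    rw [Finset.card_insert_of_notMem hiS] at hw'
    refine ⟨(-(w i / c i)) • c + c', C.add_mem (C.smul_mem _ hcC) hc', ?_⟩
    rw [← add_assoc w]
    omega

/-- On a repair set `J`, a codeword is zero or has at least `δ` nonzero coordinates. Here `T`
is any set containing the support of `c` within `J`. -/
lemma repair_card {C : Submodule F (ι → F)} {J : Finset ι} {δ : ℕ}
    (hJ : minDistGE F (punctured F C J : Set (↥J → F)) δ) {c : ι → F} (hc : c ∈ C)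
    {T : Finset ι} (hT : ∀ i ∈ J, i ∉ T → c i = 0) {i : ι} (hi : i ∈ J) (hci : c i ≠ 0) :
    δ ≤ T.card := by
  have h := hJ (LinearMap.funLeft F F (Subtype.val : ↥J → ι) c)
    (Submodule.mem_map_of_mem hc) (fun h0 => hci (congrFun h0 ⟨i, hi⟩))
  refine h.trans ?_
  unfold hammingNorm
  refine Finset.card_le_card_of_injOn Subtype.val ?_ Subtype.val_injective.injOn
  intro x hx
  replace hx := (Finset.mem_filter.mp (Finset.mem_coe.mp hx)).2
  by_contra hxT
  exact hx (hT x x.2 hxT)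

/-- The effect of adjoining `m` repair sets: the dimension drops by at most `m * r`, while
dimension plus number of coordinates grows by at least `m * (δ - 1)`. -/
lemma exists_repair_union {C : Submodule F (ι → F)} {r δ : ℕ} (hδ : 2 ≤ δ)
    (hC : HasLocalityRD F C r δ) (m : ℕ) (hm : m * r < Module.finrank F C) :
    ∃ S : Finset ι, Module.finrank F C ≤ Module.finrank F (sh C S) + m * r ∧
      Module.finrank F C + m * (δ - 1) ≤ S.card + Module.finrank F (sh C S) := by
  induction m with
  | zero => exact ⟨∅, by rw [sh_empty]; simp, by rw [sh_empty]; simp⟩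
  | succ m ih =>
    rw [add_mul, one_mul] at hm
    obtain ⟨S, h1, h2⟩ := ih (by omega)
    obtain ⟨c, hc, i, hiS, hi⟩ := exists_ne_of_finrank_pos (C := C) (S := S) (by omega)
    obtain ⟨J, hiJ, hJcard, hJ⟩ := hC i
    obtain ⟨hcC, hcS⟩ := mem_sh.mp hc
    have hcard : δ ≤ (J \ S).card := repair_card hJ hcC (fun l hl hlT => hcS l (by
      by_contra hlS
      exact hlT (Finset.mem_sdiff.mpr ⟨hl, hlS⟩))) hiJ hi
    obtain ⟨T, hTJ, hT⟩ := Finset.exists_subset_card_eq (show δ - 1 ≤ (J \ S).card by omega)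
    -- The `δ - 1` coordinates in `T` are free: vanishing on `J \ T` forces vanishing on `J`.
    have hle : sh C (S ∪ ((J \ S) \ T)) ≤ sh C (S ∪ J) := by
      intro x hx
      obtain ⟨hxC, hxS⟩ := mem_sh.mp hx
      refine mem_sh.mpr ⟨hxC, fun l hl => ?_⟩
      rcases Finset.mem_union.mp hl with hl | hl
      · exact hxS l (Finset.mem_union_left _ hl)
      · by_contra hxl
        have := repair_card hJ hxC (T := T) (fun a ha haT => hxS a (by
          by_cases haS : a ∈ S <;> simp [ha, haT, haS])) hl hxl
        omega
    have h3 := Submodule.finrank_mono hle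
    have h4 := finrank_sh_union C S ((J \ S) \ T)
    have h5 := Finset.card_sdiff_add_card_eq_card hTJ
    have h6 : (S ∪ J).card = S.card + (J \ S).card := by
      rw [← Finset.union_sdiff_self_eq_union,
        Finset.card_union_of_disjoint Finset.disjoint_sdiff]
    have h7 : (J \ S).card ≤ J.card := Finset.card_le_card Finset.sdiff_subset
    refine ⟨S ∪ J, ?_, ?_⟩
    · rw [add_mul, one_mul]
      omega
    · rw [add_mul, one_mul]
      omega

/-- Singleton bound for codes with `(r, δ)` locality; the best choice of `m` is
`⌈dim C / r⌉ - 1`. -/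
lemma singleton_locality {C : Submodule F (ι → F)} {r δ : ℕ} (hδ : 2 ≤ δ)
    (hC : HasLocalityRD F C r δ) (m : ℕ) (hm : m * r < Module.finrank F C) :
    ∃ c ∈ C, c ≠ 0 ∧
      hammingNorm c + Module.finrank F C + m * (δ - 1) ≤ Fintype.card ι + 1 := by
  obtain ⟨S, h1, h2⟩ := exists_repair_union hδ hC m hm
  obtain ⟨c, hc, h0, hw⟩ := exists_light_s15 C (Module.finrank F (sh C S) - 1) S (by omega)
  exact ⟨c, hc, h0, by omega⟩

end Block

/-! ### Column distances -/

section Conv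

variable {F : Type} [Field F] {k n : ℕ} {G : ℕ → Matrix (Fin k) (Fin n) F}

lemma vecMul_injective (hG0 : (G 0).rank = k) :
    Function.Injective (G 0).vecMulLinear := by
  have h : LinearIndependent F (G 0).row := by
    rw [linearIndependent_iff_card_eq_finrank_span, Set.finrank, ← Matrix.rank_eq_finrank_span_row]
    simp [hG0]
  exact Matrix.vecMul_injective_iff.mpr h

lemma hammingNorm_prod_succ {i : ℕ} (x : Fin (i + 2) × Fin n → F) :
    hammingNorm x = hammingNorm (fun p : Fin (i + 1) × Fin n => x (p.1.castSucc, p.2)) +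
      hammingNorm (fun b => x (Fin.last (i + 1), b)) := by
  simp only [hammingNorm, Finset.card_filter, Fintype.sum_prod_type]
  rw [Fin.sum_univ_castSucc]

lemma colDist_mem (hk : 0 < k) (i : ℕ) : ∃ u : (Fin (i + 1) × Fin k) → F,
    (fun a => u (0, a)) ≠ 0 ∧
      colDist F k n G i = hammingNorm (Matrix.vecMul u (truncGen F k n G i)) := by
  refine Nat.sInf_mem (s := {w | ∃ u : (Fin (i + 1) × Fin k) → F, (fun i => u (0, i)) ≠ 0 ∧
    w = hammingNorm (Matrix.vecMul u (truncGen F k n G i))}) ⟨_, fun _ => 1, ?_, rfl⟩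
  intro h
  exact one_ne_zero (congrFun h ⟨0, hk⟩)

lemma colDist_le {i : ℕ} (u : (Fin (i + 1) × Fin k) → F) (hu : (fun a => u (0, a)) ≠ 0) :
    colDist F k n G i ≤ hammingNorm (Matrix.vecMul u (truncGen F k n G i)) :=
  Nat.sInf_le ⟨u, hu, rfl⟩

lemma colDist_succ_le (hk : 0 < k) (hG0 : (G 0).rank = k) (i : ℕ) :
    colDist F k n G (i + 1) + k ≤ colDist F k n G i + n := by
  obtain ⟨u, hu, hd⟩ := colDist_mem (F := F) (n := n) (G := G) hk i
  -- The contribution of the first `i + 1` input blocks to the last output block.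
  let w : Fin n → F := fun b => ∑ s : Fin (i + 1), ∑ a, u (s, a) * G (i + 1 - s) a b
  have hfin : Module.finrank F (LinearMap.range (G 0).vecMulLinear) = k := by
    rw [LinearMap.finrank_range_of_inj (vecMul_injective hG0)]
    simp
  obtain ⟨c, ⟨v, rfl⟩, hv⟩ := exists_coset_light (LinearMap.range (G 0).vecMulLinear) k ∅ w
    (by rw [sh_empty, hfin]) (by simp)
  let u' : Fin (i + 2) × Fin k → F := fun p =>
    Fin.snoc (α := fun _ => Fin k → F) (fun s a => u (s, a)) v p.1 p.2
  have hu's (s : Fin (i + 1)) (a) : u' (s.castSucc, a) = u (s, a) := by simp [u']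
  have hu'l (a) : u' (Fin.last (i + 1), a) = v a := by simp [u']
  have hle := colDist_le (F := F) (n := n) (G := G) (i := i + 1) u' (by
    intro h
    refine hu (funext fun a => ?_)
    rw [← hu's]
    exact congrFun h a)
  rw [hammingNorm_prod_succ] at hle
  have e1 : (fun p : Fin (i + 1) × Fin n =>
      Matrix.vecMul u' (truncGen F k n G (i + 1)) (p.1.castSucc, p.2)) =
      Matrix.vecMul u (truncGen F k n G i) := by
    funext ⟨t, b⟩
    have ht : ¬ (i + 1 ≤ (t : ℕ)) := by omega
    simp only [Matrix.vecMul, dotProduct, Fintype.sum_prod_type, truncGen, Matrix.of_apply]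
    rw [Fin.sum_univ_castSucc]
    simp [hu's, ht]
  have e2 : (fun b => Matrix.vecMul u' (truncGen F k n G (i + 1)) (Fin.last (i + 1), b)) =
      w + (G 0).vecMulLinear v := by
    funext b
    simp only [Matrix.vecMul, dotProduct, Fintype.sum_prod_type, truncGen, Matrix.of_apply,
      Pi.add_apply, Matrix.vecMulLinear_apply, w]
    rw [Fin.sum_univ_castSucc]
    have hs (s : Fin (i + 1)) : (s : ℕ) ≤ i + 1 := by omega
    simp [hu's, hu'l, hs]
  rw [e1, e2, ← hd] at hle
  simp only [Finset.card_empty, Fintype.card_fin] at hv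
  omega

lemma colDist_add_le (hk : 0 < k) (hG0 : (G 0).rank = k) (i l : ℕ) :
    colDist F k n G (i + l) + l * k ≤ colDist F k n G i + l * n := by
  induction l with
  | zero => simp
  | succ l ih =>
    have := colDist_succ_le (F := F) (n := n) hk hG0 (i + l)
    rw [add_mul, add_mul, one_mul, one_mul, ← add_assoc i]
    omega

lemma colDist_zero_le (hG0 : (G 0).rank = k) {r δ : ℕ} (hδ : 2 ≤ δ)
    (hloc : HasLocalityRD F (truncCode F k n G 0) r δ) (m : ℕ) (hm : m * r < k) :
    colDist F k n G 0 + k + m * (δ - 1) ≤ n + 1 := by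
  have hinj : Function.Injective (truncGen F k n G 0).vecMulLinear := by
    rw [← LinearMap.ker_eq_bot, LinearMap.ker_eq_bot']
    intro u hu
    have h0 : (G 0).vecMulLinear (fun a => u (0, a)) = 0 := by
      funext b
      have := congrFun hu (0, b)
      simpa [Matrix.vecMul, dotProduct, Fintype.sum_prod_type, truncGen] using this
    have h1 := vecMul_injective hG0 (h0.trans (map_zero _).symm)
    funext ⟨s, a⟩
    rw [Fin.fin_one_eq_zero s]
    exact congrFun h1 a
  have hfin : Module.finrank F (truncCode F k n G 0) = k := by
    unfold truncCode
    rw [LinearMap.finrank_range_of_inj hinj]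
    simp
  obtain ⟨c, ⟨u, rfl⟩, h0, hw⟩ := singleton_locality hδ hloc m (by rwa [hfin])
  have hle := colDist_le (F := F) (n := n) (G := G) u (by
    intro h
    apply h0
    have : u = 0 := by
      funext ⟨s, a⟩
      rw [Fin.fin_one_eq_zero s]
      exact congrFun h a
    rw [this, map_zero])
  rw [hfin] at hw
  simp only [Fintype.card_prod, Fintype.card_fin, zero_add, one_mul] at hw
  exact le_trans (by simpa using hle) hw

end Conv

end LRC

/-- Propagation of optimality of the column distance for convolutional
codes with locality. -/
theorem statement15 (q n k r δ M : ℕ) (F : Type) [Field F] [Fintype F]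
    (hq : ∃ p s : ℕ, p.Prime ∧ 0 < s ∧ q = p ^ s)
    (hcard : Fintype.card F = q)
    (hk : 0 < k) (hn : 0 < n) (hkn : k ≤ n) (hr : 0 < r) (hδ : 2 ≤ δ)
    (G : ℕ → Matrix (Fin k) (Fin n) F)
    (hGM : ∀ l, M < l → G l = 0)
    (hG0 : (G 0).rank = k)
    (j : ℕ)
    (hloc : ∀ i ≤ j, LRC.HasLocalityRD F (LRC.truncCode F k n G i) r δ)
    (hopt : (LRC.colDist F k n G j : ℤ) =
      ((n : ℤ) - k) * (j + 1) + δ - (((k + r - 1) / r : ℕ) : ℤ) * ((δ : ℤ) - 1)) :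
    ∀ i ≤ j, (LRC.colDist F k n G i : ℤ) =
      ((n : ℤ) - k) * (i + 1) + δ - (((k + r - 1) / r : ℕ) : ℤ) * ((δ : ℤ) - 1) := by
  intro i hi
  -- `m + 1 = ⌈k / r⌉`
  obtain ⟨m, hm⟩ : ∃ m, m = (k - 1) / r := ⟨_, rfl⟩
  have hceil : (k + r - 1) / r = m + 1 := by
    rw [hm, show k + r - 1 = k - 1 + r by omega, Nat.add_div_right _ hr]
  have hmr : m * r < k := by
    have := Nat.div_mul_le_self (k - 1) r
    rw [← hm] at this
    omega
  have h0 := LRC.colDist_zero_le hG0 hδ (hloc 0 (Nat.zero_le _)) m hmr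
  have h1 := LRC.colDist_add_le (F := F) (n := n) hk hG0 0 i
  have h2 := LRC.colDist_add_le (F := F) (n := n) hk hG0 i (j - i)
  rw [zero_add] at h1
  rw [Nat.add_sub_cancel' hi] at h2
  rw [hceil] at hopt ⊢
  zify [hi, (by omega : 1 ≤ δ)] at h0 h1 h2
  push_cast at hopt ⊢
  apply le_antisymm
  · linarith
  · linarith
end
end
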